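/- arXiv:0806.4318 — 3 statements merged into one kernel-verified Lean document; each statement's English description precedes it below -/
import Mathlib

section
/- The number of lattice walks of length 3n in the quarter plane Z≥0 × Z≥0, starting and ending at the origin (0,0), using only steps from S = {(-1,0), (0,-1), (1,1)}, equals 4^n / ((n+1)(2n+1)) · C(3n, n). -/
open Finset

/-- Number of quarter-plane walks of length `m` from `(0,0)` to `e` with steps in `S`:
sequences of `m` steps, each in `S`, all partial sums having nonnegative coordinates,
with total sum `e`. -/
noncomputable def qpWalks (S : Set (ℤ × ℤ)) (m : ℕ) (e : ℤ × ℤ) : ℕ :=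
  Nat.card {f : Fin m → ℤ × ℤ //
    (∀ i, f i ∈ S) ∧
    (∀ k : ℕ,
      0 ≤ (∑ i ∈ Finset.univ.filter (fun i : Fin m => (i : ℕ) < k), f i).1 ∧
      0 ≤ (∑ i ∈ Finset.univ.filter (fun i : Fin m => (i : ℕ) < k), f i).2) ∧
    (∑ i, f i) = e}

open PowerSeries in
/-- Contractions of the `X`-adic topology have fixed points. -/
lemma ps_fixpoint {R : Type*} [CommRing R] (f : R⟦X⟧ → R⟦X⟧)
    (hf : ∀ k a b, (X : R⟦X⟧) ^ k ∣ a - b → (X : R⟦X⟧) ^ (k + 1) ∣ f a - f b) :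
    ∃ a, f a = a := by
  have h1 : ∀ k, (X : R⟦X⟧) ^ k ∣ f^[k + 1] 0 - f^[k] 0 := by
    intro k
    induction k with
    | zero => simp
    | succ k ih =>
      have := hf _ _ _ ih
      rwa [← Function.iterate_succ_apply' f, ← Function.iterate_succ_apply' f] at this
  have h2 : ∀ k l, (X : R⟦X⟧) ^ k ∣ f^[k + l] 0 - f^[k] 0 := by
    intro k l
    induction l with
    | zero => simp
    | succ l ih =>
      have h3 := (pow_dvd_pow (X : R⟦X⟧) (Nat.le_add_right k l)).trans (h1 (k + l))
      have := dvd_add h3 ih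
      rwa [sub_add_sub_cancel] at this
  let a : R⟦X⟧ := PowerSeries.mk fun n => coeff n (f^[n + 1] 0)
  have h4 : ∀ k, (X : R⟦X⟧) ^ k ∣ a - f^[k] 0 := by
    intro k
    rw [X_pow_dvd_iff]
    intro m hm
    obtain ⟨l, rfl⟩ := Nat.exists_eq_add_of_le (Nat.succ_le_of_lt hm)
    have := X_pow_dvd_iff.1 (h2 (m + 1) l) m (by omega)
    simp only [map_sub, sub_eq_zero] at this
    simp only [map_sub, a, coeff_mk, sub_eq_zero]
    exact this.symm
  refine ⟨a, ?_⟩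
  rw [← sub_eq_zero]
  ext m
  have h5 : (X : R⟦X⟧) ^ (m + 1) ∣ f a - a := by
    have h6 := hf _ _ _ (h4 m)
    have h7 := h4 (m + 1)
    rw [Function.iterate_succ_apply'] at h7
    have := dvd_sub h6 h7
    rwa [sub_sub_sub_cancel_right] at this
  simpa using X_pow_dvd_iff.1 h5 m (by omega)

open PowerSeries in
lemma exists_B : ∃ B : ℚ⟦X⟧, B = 1 + 4 * X ^ 3 * B ^ 3 := by
  obtain ⟨B, hB⟩ := ps_fixpoint (fun B : ℚ⟦X⟧ => 1 + 4 * X ^ 3 * B ^ 3) (by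
    rintro k a b ⟨c, hc⟩
    refine ⟨4 * X ^ 2 * c * (a ^ 2 + a * b + b ^ 2), ?_⟩
    linear_combination 4 * X ^ 3 * (a ^ 2 + a * b + b ^ 2) * hc)
  exact ⟨B, hB.symm⟩

open PowerSeries in
lemma exists_C {R : Type*} [CommRing R] (u : R) :
    ∃ c : R⟦X⟧, c = 1 + X * C u * c ^ 2 := by
  obtain ⟨B, hB⟩ := ps_fixpoint (fun B : R⟦X⟧ => 1 + X * C u * B ^ 2) (by
    rintro k a b ⟨c, hc⟩
    refine ⟨C u * c * (a + b), ?_⟩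
    linear_combination X * C u * (a + b) * hc)
  exact ⟨B, hB.symm⟩

open PowerSeries in
lemma coeff_theta (f : ℚ⟦X⟧) (m : ℕ) : coeff m (X * d⁄dX ℚ f) = m * coeff m f := by
  cases m with
  | zero => simp
  | succ m => rw [coeff_succ_X_mul, coeff_derivative]; push_cast; ring

open PowerSeries in
lemma coeff_F (B : ℚ⟦X⟧) (hB : B = 1 + 4 * X ^ 3 * B ^ 3) (n : ℕ) :
    coeff (3 * n) (B * (1 - 2 * X ^ 3 * B ^ 3) : ℚ⟦X⟧) =
      4 ^ n / ((n + 1) * (2 * n + 1)) * (3 * n).choose n := by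
  set F : ℚ⟦X⟧ := B * (1 - 2 * X ^ 3 * B ^ 3) with hF
  have h0 : constantCoeff B = 1 := by
    have := congrArg constantCoeff hB
    simpa using this
  have hG : 2 * F = B * (3 - B) := by
    linear_combination 2 * hF + B * hB
  let D : ℚ⟦X⟧ → ℚ⟦X⟧ := fun f => X * d⁄dX ℚ f
  have Dmul : ∀ f g, D (f * g) = D f * g + f * D g := by
    intro f g; simp only [D, Derivation.leibniz, smul_eq_mul]; ring
  have Dadd : ∀ f g, D (f + g) = D f + D g := by
    intro f g; simp only [D, map_add]; ring
  have Dsub : ∀ f g, D (f - g) = D f - D g := by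
    intro f g; simp only [D, map_sub]; ring
  have Dnat : ∀ k : ℕ, D (k : ℚ⟦X⟧) = 0 := by
    intro k; simp only [D, Derivation.map_natCast, mul_zero]
  have D1 : D 1 = 0 := by simpa using Dnat 1
  have D2 : D 2 = 0 := by simpa using Dnat 2
  have D3 : D 3 = 0 := by simpa using Dnat 3
  have D4 : D 4 = 0 := by simpa using Dnat 4
  have DX : D X = X := by simp [D]
  have hT0 : D B = 12 * X ^ 3 * B ^ 3 + 12 * X ^ 3 * B ^ 2 * D B := by
    conv_lhs => rw [hB]
    simp only [Dadd, Dmul, pow_succ, pow_zero, D1, D4, DX]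
    ring
  have hT : D B * (3 - 2 * B) = 3 * B * (B - 1) := by
    linear_combination B * hT0 - (3 * B + 3 * D B) * hB
  have hDG : 2 * D F = 3 * B * (B - 1) := by
    have := congrArg D hG
    simp only [Dmul, Dsub, D2, D3] at this
    linear_combination this + hT
  have hDDG : 2 * D (D F) = 3 * (2 * B - 1) * D B := by
    have := congrArg D hDG
    simp only [Dmul, Dsub, D2, D3, D1] at this
    linear_combination this
  have hne : (3 - 2 * B) * B ^ 3 ≠ 0 := by
    intro h
    have := congrArg constantCoeff h
    have c3 : constantCoeff (3 : ℚ⟦X⟧) = 3 := map_ofNat _ 3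
    have c2 : constantCoeff (2 : ℚ⟦X⟧) = 2 := map_ofNat _ 2
    simp only [map_mul, map_sub, map_pow, h0, map_zero, c2, c3] at this
    norm_num at this
  have hode : 2 * D (D F) + 9 * D F + 9 * F - 54 * (X ^ 3 * (D (D F) + 3 * D F + 2 * F)) = 9 := by
    have key : ((3 - 2 * B) * B ^ 3) * (4 * (2 * D (D F) + 9 * D F + 9 * F
      - 54 * (X ^ 3 * (D (D F) + 3 * D F + 2 * F)) - 9)) = 0 := by
      linear_combination (2 * hDDG * (3-2*B)*B^3*(2-54*X^3)) + 2 * hDG*(3-2*B)*B^3*(9-162*X^3)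
        + 2 * hG*(3-2*B)*B^3*(9-108*X^3) + 2 * hT*3*(2*B-1)*B^3*(2-54*X^3)
        + 27 * hB * (3*(2*B-1)*3*B*(B-1) + (3-2*B)*(3*3*B*(B-1)+2*B*(3-B)))
    have := (mul_eq_zero.1 key).resolve_left hne
    have h2 : (4 : ℚ⟦X⟧) ≠ 0 := by
      intro h
      have := congrArg constantCoeff h
      rw [map_ofNat] at this
      norm_num at this
    have := (mul_eq_zero.1 this).resolve_left h2
    linear_combination this
  have hD : ∀ f m, coeff m (D f) = m * coeff m f := coeff_theta
  have hrec : ∀ m : ℕ, ((m : ℚ) + 6) * (2 * m + 9) * coeff (m + 3) F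
      = 54 * (m + 1) * (m + 2) * coeff m F := by
    intro m
    have h := congrArg (coeff (m + 3)) hode
    have e9 : (9 : ℚ⟦X⟧) = C 9 := (map_ofNat C 9).symm
    have e54 : (54 : ℚ⟦X⟧) = C 54 := (map_ofNat C 54).symm
    have e2 : (2 : ℚ⟦X⟧) = C 2 := (map_ofNat C 2).symm
    have e3 : (3 : ℚ⟦X⟧) = C 3 := (map_ofNat C 3).symm
    rw [e9, e54, e2, e3] at h
    simp only [map_add, map_sub, coeff_C_mul, coeff_X_pow_mul, hD, coeff_C] at h
    simp at h
    linear_combination h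
  induction n with
  | zero =>
    rw [mul_zero, coeff_zero_eq_constantCoeff_apply, hF]
    simp [h0]
  | succ n ih =>
    have h := hrec (3 * n)
    rw [ih] at h
    have hc : (((3 * (n + 1)).choose (n + 1) : ℕ) : ℚ) * ((n + 1) * (2 * n + 2) * (2 * n + 1))
        = (3 * n).choose n * ((3 * n + 1) * (3 * n + 2) * (3 * n + 3)) := by
      rw [Nat.cast_choose ℚ (by omega), Nat.cast_choose ℚ (by omega)]
      rw [show 3 * (n + 1) - (n + 1) = 2 * n + 1 + 1 by omega, show 3 * n - n = 2 * n by omega,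
        show 3 * (n + 1) = 3 * n + 1 + 1 + 1 by ring]
      simp only [Nat.factorial_succ]
      push_cast
      have a1 : (n.factorial : ℚ) ≠ 0 := by positivity
      have a2 : ((2 * n).factorial : ℚ) ≠ 0 := by positivity
      field_simp
      ring
    rw [show 3 * (n + 1) = 3 * n + 3 by ring] at hc ⊢
    push_cast at h hc ⊢
    have hn : ((3 : ℚ) * n + 6) * (2 * (3 * n) + 9) ≠ 0 := by positivity
    apply mul_left_cancel₀ hn
    rw [h]
    have hc' : (((3 * n + 3).choose (n + 1) : ℕ) : ℚ)
        = (3 * n).choose n * ((3 * n + 1) * (3 * n + 2) * (3 * n + 3)) /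
          ((n + 1) * (2 * n + 2) * (2 * n + 1)) := by
      rw [← hc]; field_simp
    rw [hc']
    field_simp
    ring

open PowerSeries in
/-- The quadratic functional equation with one catalytic variable. -/
lemma catalytic_eq (B : ℚ⟦X⟧) (hB : B = 1 + 4 * X ^ 3 * B ^ 3) :
    ∃ q : ℚ⟦X⟧⟦X⟧, coeff 0 q = B * (1 - 2 * X ^ 3 * B ^ 3) ∧
      2 * C X * (q - C (B * (1 - 2 * X ^ 3 * B ^ 3))) = X * (q - 1) - C X ^ 2 * X ^ 2 * q ^ 2 := by
  obtain ⟨c, hc⟩ := exists_C (X ^ 2 * B ^ 2 : ℚ⟦X⟧)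
  have h0 : constantCoeff B = 1 := by
    have := congrArg constantCoeff hB
    simpa using this
  have hc0 : constantCoeff c = 1 := by
    have := congrArg constantCoeff hc
    simpa using this
  refine ⟨C B * (c - C (2 * X ^ 3 * B ^ 3) * c ^ 2), ?_, ?_⟩
  · simp only [coeff_zero_eq_constantCoeff_apply, map_mul, map_sub, map_pow, hc0]
    simp
  · have hBne : B ≠ 0 := by rintro rfl; simp at h0
    have hcne : c ≠ 0 := by rintro rfl; simp at hc0
    have hne : (C (X ^ 2 * B ^ 2) * c ^ 2 : ℚ⟦X⟧⟦X⟧) ≠ 0 := by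
      refine mul_ne_zero ?_ (pow_ne_zero _ hcne)
      rw [Ne, map_eq_zero_iff _ C_injective]
      exact mul_ne_zero (pow_ne_zero _ X_ne_zero) (pow_ne_zero _ hBne)
    apply mul_right_cancel₀ hne
    have hB' := congrArg (C : ℚ⟦X⟧ →+* ℚ⟦X⟧⟦X⟧) hB
    have e2 : C (2 : ℚ⟦X⟧) = 2 := map_ofNat C 2
    have e4 : C (4 : ℚ⟦X⟧) = 4 := map_ofNat C 4
    simp only [map_mul, map_sub, map_add, map_pow, map_one, e2, e4] at hB' hc ⊢
    generalize (C B : ℚ⟦X⟧⟦X⟧) = b at *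
    generalize (C X : ℚ⟦X⟧⟦X⟧) = t at *
    generalize (X : ℚ⟦X⟧⟦X⟧) = x at *
    obtain ⟨p, hp⟩ : ∃ p, p = 2 * t ^ 3 * b ^ 3 := ⟨_, rfl⟩
    have hb : b = 1 + 2 * p := by linear_combination hB' - 2 * hp
    have hx : x * (t ^ 2 * b ^ 2) * c ^ 2 = c - 1 := by linear_combination -hc
    have e : 2 * t ^ 3 * b ^ 3 = p := hp.symm
    have eMain : 2 * t * (b * (c - p * c ^ 2) - b * (1 - p)) * (t ^ 2 * b ^ 2 * c ^ 2)
      = (x * (b * (c - p * c ^ 2) - 1) - t ^ 2 * x ^ 2 * (b * (c - p * c ^ 2)) ^ 2) *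
        (t ^ 2 * b ^ 2 * c ^ 2) := by
      have a1 : 2 * t * (b * (c - p * c ^ 2) - b * (1 - p)) * (t ^ 2 * b ^ 2 * c ^ 2)
        = p * c ^ 2 * ((c - 1) - p * (c ^ 2 - 1)) := by
        linear_combination c ^ 2 * ((c - 1) - p * (c ^ 2 - 1)) * e
      have a2 : (x * (b * (c - p * c ^ 2) - 1) - t ^ 2 * x ^ 2 * (b * (c - p * c ^ 2)) ^ 2) *
        (t ^ 2 * b ^ 2 * c ^ 2) = (x * (t ^ 2 * b ^ 2) * c ^ 2) * (b * (c - p * c ^ 2) - 1)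
          - (x * (t ^ 2 * b ^ 2) * c ^ 2) ^ 2 * (1 - p * c) ^ 2 := by ring
      rw [a1, a2, hx, hb]
      ring
    rw [← hp]
    exact eMain

open PowerSeries in
/-- The coefficient array of the full generating function. -/
lemma exists_array (F : ℚ⟦X⟧) (q : ℚ⟦X⟧⟦X⟧) (hq0 : coeff 0 q = F)
    (hq : 2 * C X * (q - C F) = X * (q - 1) - C X ^ 2 * X ^ 2 * q ^ 2) :
    ∃ Q : ℕ → ℕ → ℚ⟦X⟧, Q 0 0 = F ∧ ∀ i j, Q i j = (if i = 0 ∧ j = 0 then 1 else 0) +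
      X * (Q (i + 1) j + Q i (j + 1) + if i = 0 ∨ j = 0 then 0 else Q (i - 1) (j - 1)) := by
  let x : ℚ⟦X⟧⟦X⟧⟦X⟧ := C X
  let y : ℚ⟦X⟧⟦X⟧⟦X⟧ := X
  let t : ℚ⟦X⟧⟦X⟧⟦X⟧ := C (C X)
  let qx : ℚ⟦X⟧⟦X⟧⟦X⟧ := C q
  let qy : ℚ⟦X⟧⟦X⟧⟦X⟧ := PowerSeries.map C q
  let N : ℚ⟦X⟧⟦X⟧⟦X⟧ := PowerSeries.mk fun j => PowerSeries.mk fun i => coeff (i + j) q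
  have hx : 2 * t * (qx - C (C F)) = x * (qx - 1) - t ^ 2 * x ^ 2 * qx ^ 2 := by
    have := congrArg (C : ℚ⟦X⟧⟦X⟧ →+* ℚ⟦X⟧⟦X⟧⟦X⟧) hq
    have e2 : C (2 : ℚ⟦X⟧⟦X⟧) = 2 := map_ofNat C 2
    simpa only [map_mul, map_sub, map_add, map_pow, map_one, e2] using this
  have hy : 2 * t * (qy - C (C F)) = y * (qy - 1) - t ^ 2 * y ^ 2 * qy ^ 2 := by
    have := congrArg (PowerSeries.map (C : ℚ⟦X⟧ →+* ℚ⟦X⟧⟦X⟧)) hq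
    have e2 : PowerSeries.map (C : ℚ⟦X⟧ →+* ℚ⟦X⟧⟦X⟧) 2 = 2 := map_ofNat _ 2
    simpa only [map_mul, map_sub, map_add, map_pow, map_one, e2, map_C, map_X] using this
  have hN : (x - y) * N = x * qx - y * qy := by
    ext1 j
    ext1 i
    rw [sub_mul]
    cases j with
    | zero =>
      cases i with
      | zero => simp [x, y, qx, N, coeff_C_mul]
      | succ i => simp [x, y, qx, N, coeff_C_mul, coeff_succ_X_mul]
    | succ j =>
      cases i with
      | zero =>
        simp [x, y, qx, qy, N, coeff_C_mul, coeff_succ_X_mul, coeff_C]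
      | succ i =>
        simp [x, y, qx, qy, N, coeff_C_mul, coeff_succ_X_mul, coeff_C]
        rw [show i + (j + 1) = i + 1 + j by ring, sub_self]
  have hxy : x - y ≠ 0 := by
    intro h
    have := congrArg (fun f => coeff 0 (coeff 1 f)) h
    simp [x, y, coeff_C] at this
  have hu : IsUnit (1 - t * x * y * N) := by
    rw [isUnit_iff_constantCoeff]
    simp [y]
  obtain ⟨Q, hQ⟩ : ∃ Q, Q * (1 - t * x * y * N) = N := by
    obtain ⟨u, hu⟩ := hu
    exact ⟨N * ↑u⁻¹, by rw [← hu, mul_assoc, Units.inv_mul, mul_one]⟩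
  have hK : (x * y - t * (x + y + x ^ 2 * y ^ 2)) * Q = x * y - t * x * qx - t * y * qy := by
    apply mul_right_cancel₀ (mul_ne_zero hxy hu.ne_zero)
    have h1 : (x * y - t * (x + y + x ^ 2 * y ^ 2)) * Q * ((x - y) * (1 - t * x * y * N))
      = (x * y - t * (x + y + x ^ 2 * y ^ 2)) * (x * qx - y * qy) := by
      rw [← hN]
      linear_combination (x * y - t * (x + y + x ^ 2 * y ^ 2)) * (x - y) * hQ
    have h2 : (x * y - t * x * qx - t * y * qy) * ((x - y) * (1 - t * x * y * N))
      = (x * y - t * x * qx - t * y * qy) * ((x - y) - t * x * y * (x * qx - y * qy)) := by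
      rw [← hN]; ring
    rw [h1, h2]
    linear_combination (-x * y) * (hx - hy)
  have hK' : x * (y * Q) = x * y + t * (x * Q + y * Q + x * (x * (y * (y * Q)))) - t * (x * qx)
      - t * (y * qy) := by
    linear_combination hK
  have cC : ∀ (a : ℚ⟦X⟧) (f : ℚ⟦X⟧⟦X⟧⟦X⟧) i j,
      coeff i (coeff j (C (C a) * f)) = a * coeff i (coeff j f) := by
    intro a f i j; rw [coeff_C_mul, coeff_C_mul]
  refine ⟨fun i j => coeff i (coeff j Q), ?_, ?_⟩
  · have := congrArg (fun f => coeff 0 (coeff 0 f)) hQ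
    simpa [y, N, hq0] using this
  · intro i j
    have h := congrArg (fun f => coeff (i + 1) (coeff (j + 1) f)) hK'
    simp only [map_add, map_sub, t, cC] at h
    simp only [x, y, qx, qy, coeff_C_mul, coeff_succ_X_mul, coeff_X, coeff_C, coeff_map] at h
    rcases i with _ | i <;> rcases j with _ | j <;>
      simp [coeff_succ_X_mul, coeff_X, coeff_one] at h ⊢ <;>
      linear_combination h

def walkSet (S : Set (ℤ × ℤ)) (m : ℕ) (e : ℤ × ℤ) : Set (Fin m → ℤ × ℤ) :=
  {f | (∀ i, f i ∈ S) ∧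
    (∀ k : ℕ,
      0 ≤ (∑ i ∈ Finset.univ.filter (fun i : Fin m => (i : ℕ) < k), f i).1 ∧
      0 ≤ (∑ i ∈ Finset.univ.filter (fun i : Fin m => (i : ℕ) < k), f i).2) ∧
    (∑ i, f i) = e}

lemma qpWalks_eq (S : Set (ℤ × ℤ)) (m : ℕ) (e : ℤ × ℤ) :
    qpWalks S m e = (walkSet S m e).ncard := rfl

lemma walkSet_finite {S : Set (ℤ × ℤ)} (hS : S.Finite) (m : ℕ) (e : ℤ × ℤ) :
    (walkSet S m e).Finite := by
  apply (Set.Finite.pi' (fun _ : Fin m => hS)).subset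
  intro f hf
  exact hf.1

lemma walkSet_neg {S : Set (ℤ × ℤ)} (m : ℕ) (e : ℤ × ℤ) (he : e.1 < 0 ∨ e.2 < 0) :
    walkSet S m e = ∅ := by
  ext f
  simp only [Set.mem_empty_iff_false, iff_false]
  rintro ⟨-, h, rfl⟩
  have := h m
  rw [Finset.filter_true_of_mem (by intro i _; exact i.2)] at this
  omega

lemma partial_sum_snoc (m : ℕ) (f : Fin m → ℤ × ℤ) (s : ℤ × ℤ) (k : ℕ) :
    (∑ i ∈ Finset.univ.filter (fun i : Fin (m + 1) => (i : ℕ) < k),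
      (Fin.snoc f s : Fin (m + 1) → ℤ × ℤ) i) =
    (∑ i ∈ Finset.univ.filter (fun i : Fin m => (i : ℕ) < k), f i) + if m < k then s else 0 := by
  rw [Finset.sum_filter, Finset.sum_filter, Fin.sum_univ_castSucc]
  simp

lemma snoc_mem_walkSet {S : Set (ℤ × ℤ)} (m : ℕ) (e : ℤ × ℤ) (he : 0 ≤ e.1 ∧ 0 ≤ e.2)
    (f : Fin m → ℤ × ℤ) (s : ℤ × ℤ) :
    (Fin.snoc f s : Fin (m + 1) → ℤ × ℤ) ∈ walkSet S (m + 1) e ↔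
      s ∈ S ∧ f ∈ walkSet S m (e - s) := by
  have hsum : (∑ i, (Fin.snoc f s : Fin (m + 1) → ℤ × ℤ) i) = (∑ i, f i) + s := by
    rw [Fin.sum_univ_castSucc]; simp
  have hfull : ∀ k, m ≤ k →
      (∑ i ∈ Finset.univ.filter (fun i : Fin m => (i : ℕ) < k), f i) = ∑ i, f i := by
    intro k hk
    rw [Finset.filter_true_of_mem (by intro i _; exact i.2.trans_le hk)]
  simp only [walkSet, Set.mem_ofPred_eq, hsum, partial_sum_snoc, eq_sub_iff_add_eq]
  rw [Fin.forall_fin_succ']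
  simp only [Fin.snoc_castSucc, Fin.snoc_last]
  constructor
  · rintro ⟨⟨h1, h2⟩, h3, h4⟩
    refine ⟨h2, h1, fun k => ?_, h4⟩
    by_cases hk : m < k
    · rw [hfull k hk.le, ← hfull m le_rfl]
      simpa using h3 m
    · simpa [hk] using h3 k
  · rintro ⟨h2, h1, h3, h4⟩
    refine ⟨⟨h1, h2⟩, fun k => ?_, h4⟩
    by_cases hk : m < k
    · rw [hfull k hk.le, if_pos hk, h4]
      exact he
    · simpa [hk] using h3 k

lemma walkSet_succ {S : Set (ℤ × ℤ)} (m : ℕ) (e : ℤ × ℤ) (he : 0 ≤ e.1 ∧ 0 ≤ e.2) :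
    walkSet S (m + 1) e =
      ⋃ s ∈ S, (fun f : Fin m → ℤ × ℤ => (Fin.snoc f s : Fin (m + 1) → ℤ × ℤ)) ''
        walkSet S m (e - s) := by
  ext g
  rw [← Fin.snoc_init_self g, snoc_mem_walkSet m e he]
  simp only [Set.mem_iUnion, Set.mem_image, Fin.snoc_inj]
  constructor
  · rintro ⟨h1, h2⟩
    exact ⟨_, h1, _, h2, rfl, rfl⟩
  · rintro ⟨s, h1, f, h2, rfl, rfl⟩
    exact ⟨h1, h2⟩

abbrev krewS : Set (ℤ × ℤ) := {(-1,0), (0,-1), (1,1)}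

lemma qpWalks_succ (m : ℕ) (e : ℤ × ℤ) (he : 0 ≤ e.1 ∧ 0 ≤ e.2) :
    qpWalks krewS (m + 1) e = qpWalks krewS m (e - (-1, 0)) + qpWalks krewS m (e - (0, -1)) +
      qpWalks krewS m (e - (1, 1)) := by
  have hfin : krewS.Finite := by simp [krewS]
  have hd : ∀ s s' : ℤ × ℤ, s ≠ s' → ∀ A B : Set (Fin m → ℤ × ℤ),
      Disjoint ((fun f : Fin m → ℤ × ℤ => (Fin.snoc f s : Fin (m + 1) → ℤ × ℤ)) '' A)
        ((fun f : Fin m → ℤ × ℤ => (Fin.snoc f s' : Fin (m + 1) → ℤ × ℤ)) '' B) := by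
    intro s s' hs A B
    rw [Set.disjoint_left]
    rintro _ ⟨f, -, rfl⟩ ⟨g, -, hg⟩
    exact hs (Fin.snoc_inj.1 hg).2.symm
  have hi : ∀ s : ℤ × ℤ, Function.Injective
      (fun f : Fin m → ℤ × ℤ => (Fin.snoc f s : Fin (m + 1) → ℤ × ℤ)) :=
    fun s f g h => (Fin.snoc_inj.1 h).1
  have hF : ∀ s : ℤ × ℤ, ((fun f : Fin m → ℤ × ℤ => (Fin.snoc f s : Fin (m + 1) → ℤ × ℤ)) ''
        walkSet krewS m (e - s)).Finite := fun s => (walkSet_finite hfin _ _).image _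
  simp only [qpWalks_eq]
  rw [walkSet_succ m e he]
  simp only [krewS, Set.biUnion_insert, Set.biUnion_singleton]
  rw [Set.ncard_union_eq _ (hF _) ((hF _).union (hF _)),
    Set.ncard_union_eq _ (hF _) (hF _), Set.ncard_image_of_injective _ (hi _),
    Set.ncard_image_of_injective _ (hi _), Set.ncard_image_of_injective _ (hi _), add_assoc]
  · exact hd _ _ (by decide) _ _
  · rw [Set.disjoint_union_right]
    exact ⟨hd _ _ (by decide) _ _, hd _ _ (by decide) _ _⟩

lemma qpWalks_zero (e : ℤ × ℤ) : qpWalks krewS 0 e = if e = 0 then 1 else 0 := by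
  rw [qpWalks_eq]
  split_ifs with h
  · rw [Set.ncard_eq_one]
    refine ⟨Fin.elim0, ?_⟩
    ext f
    simp [walkSet, h, eq_iff_true_of_subsingleton]
  · have : walkSet krewS 0 e = ∅ := by
      ext f
      simp [walkSet, Ne.symm h]
    rw [this, Set.ncard_empty]

open PowerSeries in
lemma qpWalks_eq_coeff (Q : ℕ → ℕ → ℚ⟦X⟧)
    (hQ : ∀ i j, Q i j = (if i = 0 ∧ j = 0 then 1 else 0) +
      X * (Q (i + 1) j + Q i (j + 1) + if i = 0 ∨ j = 0 then 0 else Q (i - 1) (j - 1)))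
    (m : ℕ) : ∀ i j : ℕ, (qpWalks krewS m (i, j) : ℚ) = coeff m (Q i j) := by
  induction m with
  | zero =>
    intro i j
    rw [hQ, qpWalks_zero]
    by_cases h : i = 0 ∧ j = 0
    · simp [h]
    · rw [if_neg h, if_neg (by simpa [Prod.ext_iff] using h)]
      simp
  | succ m ih =>
    intro i j
    rw [hQ, qpWalks_succ _ _ (by simp), map_add, coeff_succ_X_mul]
    have h1 : coeff (m + 1) (if i = 0 ∧ j = 0 then 1 else 0 : ℚ⟦X⟧) = 0 := by
      split_ifs <;> simp [coeff_one]
    have e1 : (((i : ℤ), (j : ℤ)) - (-1, 0)) = (((i + 1 : ℕ) : ℤ), (j : ℤ)) := by simp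
    have e2 : (((i : ℤ), (j : ℤ)) - (0, -1)) = ((i : ℤ), ((j + 1 : ℕ) : ℤ)) := by simp
    rw [h1, e1, e2, zero_add, map_add, map_add]
    push_cast [← ih]
    congr 1
    split_ifs with h
    · rw [qpWalks_eq, walkSet_neg]
      · simp
      · simp; omega
    · have e3 : (((i : ℤ), (j : ℤ)) - (1, 1)) = (((i - 1 : ℕ) : ℤ), ((j - 1 : ℕ) : ℤ)) := by
        ext <;> simp <;> omega
      rw [e3, ih]

theorem kreweras_closed_walks (n : ℕ) :
    (qpWalks {(-1,0), (0,-1), (1,1)} (3 * n) (0, 0) : ℚ) =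
      4 ^ n / ((n + 1) * (2 * n + 1)) * (3 * n).choose n := by
  obtain ⟨B, hB⟩ := exists_B
  obtain ⟨q, hq0, hq⟩ := catalytic_eq B hB
  obtain ⟨Q, hQ0, hQ⟩ := exists_array _ q hq0 hq
  have h := qpWalks_eq_coeff Q hQ (3 * n) 0 0
  rw [hQ0, coeff_F B hB] at h
  exact_mod_cast h
end

section
/- For n ≥ 1, the number of closed quarter-plane walks of length 3n with step set S = {(0,1),(1,0),(-1,-1)} equals the number of closed quarter-plane walks of length 3n with Kreweras' step set S' = {(-1,0),(0,-1),(1,1)}; both equal 2·27^{n-1}(4/3)_{n-1}(5/3)_{n-1} / ((5/2)_{n-1}(3)_{n-1}). -/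
open Finset

theorem kw_key {R : Type*} [CommRing R] (x y T a b : R) (ha : a = 1 + T^2*x*a^2)
    (hb : b = 1+T^2*y*b^2) :
    (x*y*(1+4*T^3) - T*(x+y+x^2*y^2)) * (a*b*(1-2*T^3*(a*b))) =
    (x*y - T*x*a*(1-2*T^3*a) - T*y*b*(1-2*T^3*b)) * (1 - T*x*y*(a*b)*(1-T^3*(a*b))) := by
  grind

theorem kw_ode {R : Type*} [CommRing R] [IsDomain R] (h2 : (2:R) ≠ 0) (V z D : R)
    (hV : V = 1 + z*V^3) (hV0 : V ≠ 0) (h3 : 3 - 2*V ≠ 0)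
    (h : (3-2*V)*D = 3*V*(V-1)) (F F1 F2 : R) (hF : 2*F = V*(3-V))
    (hF1 : 2*F1 = 3*V*(V-1)) (hF2 : 2*F2 = 3*(2*V-1)*D) :
    2*(2*F2+9*F1+9*F) - 27*z*(F2+3*F1+2*F) = 18 := by
  apply mul_left_cancel₀ h2
  apply mul_left_cancel₀ h3
  apply mul_left_cancel₀ (pow_ne_zero 3 hV0)
  linear_combination V^3*(3-2*V)*((4-27*z)*hF2 + (18-81*z)*hF1 + (18-54*z)*hF)
    + V^3*(4-27*z)*3*(2*V-1)*h
    + (27*3*(2*V-1)*3*V*(V-1) + (3-2*V)*(81*3*V*(V-1)+54*V*(3-V)))*hV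

open PowerSeries in
theorem kw_exists {R : Type*} [CommRing R] (f : PowerSeries R) (k : ℕ) :
    ∃ a : PowerSeries R, a = 1 + X * f * a ^ k := by
  let Φ : PowerSeries R → PowerSeries R := fun a => 1 + X * f * a ^ k
  have hΦ : ∀ (n : ℕ) (a b : PowerSeries R), X ^ n ∣ a - b → X ^ (n+1) ∣ Φ a - Φ b := by
    intro n a b h
    have h1 : X ^ n ∣ a ^ k - b ^ k := h.trans (sub_dvd_pow_sub_pow a b k)
    have : Φ a - Φ b = X * (a ^ k - b ^ k) * f := by simp only [Φ]; ring
    rw [this, pow_succ']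
    exact Dvd.dvd.mul_right (mul_dvd_mul_left X h1) f
  let s : ℕ → PowerSeries R := fun n => Φ^[n] 1
  have hs : ∀ n, s (n+1) = Φ (s n) := fun n => Function.iterate_succ_apply' Φ n 1
  have h1 : ∀ n, X ^ n ∣ s (n+1) - s n := by
    intro n
    induction n with
    | zero => simp
    | succ n ih => rw [hs (n+1)]; nth_rewrite 2 [hs n]; exact hΦ _ _ _ ih
  have h2 : ∀ n d, X ^ n ∣ s (n+d) - s n := by
    intro n d
    induction d with
    | zero => simp
    | succ d ih =>
      have : s (n + (d+1)) - s n = (s (n+d+1) - s (n+d)) + (s (n+d) - s n) := by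
        rw [← add_assoc]; ring
      rw [this]
      exact dvd_add ((pow_dvd_pow X (Nat.le_add_right n d)).trans (h1 _)) ih
  let a : PowerSeries R := PowerSeries.mk fun n => coeff n (s (n+1))
  have ha : ∀ n, X ^ n ∣ a - s n := by
    intro n
    rw [X_pow_dvd_iff]
    intro m hm
    obtain ⟨d, rfl⟩ := Nat.exists_eq_add_of_le (Nat.succ_le_of_lt hm)
    have := X_pow_dvd_iff.1 (h2 (m+1) d) m (Nat.lt_succ_self m)
    simp only [map_sub, a, coeff_mk] at this ⊢
    rw [Nat.succ_eq_add_one, ← neg_sub, this, neg_zero]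
  refine ⟨a, ?_⟩
  have : ∀ n, X ^ n ∣ a - Φ a := by
    intro n
    have e : a - Φ a = (a - s (n+1)) - (Φ a - Φ (s n)) := by rw [hs]; ring
    rw [e]
    exact dvd_sub ((pow_dvd_pow X (Nat.le_succ n)).trans (ha _))
      ((pow_dvd_pow X (Nat.le_succ n)).trans (hΦ _ _ _ (ha n)))
  rw [← sub_eq_zero]
  ext n
  exact X_pow_dvd_iff.1 (this (n+1)) n (Nat.lt_succ_self n)

/-- Coefficient recursion of the closed form, as a sequence of rationals `q i j n`. -/
theorem kw_series : ∃ q : ℕ → ℕ → ℕ → ℚ, ∃ V : PowerSeries ℚ,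
    (V = 1 + PowerSeries.X * (4 * PowerSeries.X ^ 2) * V ^ 3) ∧
    (∀ n, 2 * q 0 0 n = PowerSeries.coeff n (V * (3 - V))) ∧
    (∀ i j, q i j 0 = if i = 0 ∧ j = 0 then 1 else 0) ∧
    (∀ i j n, q i j (n+1) = q (i+1) j n + q i (j+1) n +
      (if 0 < i ∧ 0 < j then q (i-1) (j-1) n else 0)) := by
  obtain ⟨V, hV⟩ := kw_exists (R := ℚ) (4 * PowerSeries.X ^ 2) 3
  let T : PowerSeries ℚ := PowerSeries.X * V
  have hVT : V = 1 + 4 * T ^ 3 := by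
    simp only [T]; conv_lhs => rw [hV]
    ring
  obtain ⟨a, ha⟩ := kw_exists (R := PowerSeries ℚ) (PowerSeries.C (T ^ 2)) 2
  let A : PowerSeries (PowerSeries (PowerSeries ℚ)) := PowerSeries.C a
  let B : PowerSeries (PowerSeries (PowerSeries ℚ)) := PowerSeries.map PowerSeries.C a
  let x : PowerSeries (PowerSeries (PowerSeries ℚ)) := PowerSeries.C PowerSeries.X
  let y : PowerSeries (PowerSeries (PowerSeries ℚ)) := PowerSeries.X
  let ι : PowerSeries ℚ →+* PowerSeries (PowerSeries (PowerSeries ℚ)) :=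
    PowerSeries.C.comp PowerSeries.C
  have hA : A = 1 + (ι T) ^ 2 * x * A ^ 2 := by
    have := congrArg (PowerSeries.C (R := PowerSeries (PowerSeries ℚ))) ha
    simp only [map_add, map_mul, map_pow, map_one] at this
    simp only [A, x, ι, RingHom.comp_apply]
    rw [mul_comm (_ ^ 2) (PowerSeries.C PowerSeries.X)]
    exact this
  have hB : B = 1 + (ι T) ^ 2 * y * B ^ 2 := by
    have := congrArg (PowerSeries.map (PowerSeries.C (R := PowerSeries ℚ))) ha
    simp only [map_add, map_mul, map_pow, map_one, PowerSeries.map_X, PowerSeries.map_C] at this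
    simp only [B, y, ι, RingHom.comp_apply]
    rw [mul_comm (_ ^ 2) (PowerSeries.X)]
    exact this
  have hu : IsUnit (1 - ι T * x * y * (A * B) * (1 - ι T ^ 3 * (A * B))) := by
    rw [PowerSeries.isUnit_iff_constantCoeff]
    simp [y]
  obtain ⟨u, hu⟩ := hu
  let Q := ι V * (A * B * (1 - 2 * ι T ^ 3 * (A * B))) * (↑u⁻¹ : PowerSeries (PowerSeries (PowerSeries ℚ)))
  have hQu : Q * u = ι V * (A * B * (1 - 2 * ι T ^ 3 * (A * B))) := by
    simp only [Q, mul_assoc, Units.inv_mul, mul_one]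
  have hkey := kw_key x y (ι T) A B hA hB
  have hιV : ι V = 1 + 4 * ι T ^ 3 := by
    have h4 : ι 4 = 4 := map_ofNat ι 4
    conv_lhs => rw [hVT]
    rw [map_add, map_one, map_mul, map_pow, h4]
  have hιT : ι T = ι PowerSeries.X * ι V := by simp only [T, map_mul]
  have hfe : x * y * Q - ι PowerSeries.X * (x * Q + y * Q + x^2 * (y ^2 * Q)) =
      x * y - ι T * x * A * (1 - 2 * ι T ^ 3 * A) - ι T * y * B * (1 - 2 * ι T ^ 3 * B) := by
    apply u.isUnit.mul_right_cancel
    rw [hu, ← hkey, ← hu, ← hιV]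
    rw [hιT] at hQu ⊢
    linear_combination (x*y - ι PowerSeries.X * (x+y+x^2*y^2)) * hQu
  refine ⟨fun i j n => PowerSeries.coeff n (PowerSeries.coeff i (PowerSeries.coeff j Q)), V, hV,
    ?_, ?_⟩
  · intro n
    have hca : PowerSeries.constantCoeff a = 1 := by rw [ha]; simp
    have : PowerSeries.constantCoeff (PowerSeries.constantCoeff Q) = V * (1 - 2 * T ^ 3) := by
      let ε : PowerSeries (PowerSeries (PowerSeries ℚ)) →+* PowerSeries ℚ :=
        PowerSeries.constantCoeff.comp PowerSeries.constantCoeff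
      have h := congrArg ε hQu
      have e2 : ε 2 = 2 := map_ofNat ε 2
      have eA : ε A = 1 := by simp [ε, A, hca]
      have eB : ε B = 1 := by
        simp only [ε, B, RingHom.comp_apply]
        rw [← PowerSeries.coeff_zero_eq_constantCoeff_apply a] at hca
        rw [← PowerSeries.coeff_zero_eq_constantCoeff_apply (PowerSeries.map _ a),
          PowerSeries.coeff_map, hca]
        simp
      have ex : ε x = 0 := by simp [ε, x]
      have eι : ∀ v, ε (ι v) = v := by intro v; simp [ε, ι]
      rw [hu] at h
      simp only [map_mul, map_sub, map_pow, map_one, e2, eA, eB, ex, eι] at h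
      simp only [mul_zero, zero_mul, sub_zero, mul_one, one_mul] at h
      exact h
    simp only [PowerSeries.coeff_zero_eq_constantCoeff, this]
    have e : V * (3 - V) = PowerSeries.C 2 * (V * (1 - 2 * T^3)) := by
      have : (PowerSeries.C 2 : PowerSeries ℚ) = 2 := map_ofNat _ 2
      rw [this]
      linear_combination (-V) * hVT
    rw [e, PowerSeries.coeff_C_mul]
  · have hc : ∀ i j, PowerSeries.coeff i (PowerSeries.coeff j Q) - PowerSeries.X *
        (PowerSeries.coeff i (PowerSeries.coeff (j+1) Q) +
          PowerSeries.coeff (i+1) (PowerSeries.coeff j Q) +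
          (if 0 < i ∧ 0 < j then PowerSeries.coeff (i-1) (PowerSeries.coeff (j-1) Q) else 0))
        = if i = 0 ∧ j = 0 then 1 else 0 := by
      intro i j
      let r : PowerSeries (PowerSeries ℚ) :=
        PowerSeries.C T * PowerSeries.X * a * (1 - PowerSeries.C (2 * T ^ 3) * a)
      have h2 : ι 2 = 2 := map_ofNat ι 2
      have hR : x * y - ι T * x * A * (1 - 2 * ι T ^ 3 * A) - ι T * y * B * (1 - 2 * ι T ^ 3 * B)
          = PowerSeries.X * PowerSeries.C PowerSeries.X - PowerSeries.C r
            - PowerSeries.map PowerSeries.C r := by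
        rw [← h2]
        simp only [x, y, A, B, ι, r, map_mul, map_sub, map_one, map_pow, RingHom.comp_apply,
          PowerSeries.map_C, PowerSeries.map_X]
        ring
      have hL : x * y * Q - ι PowerSeries.X * (x * Q + y * Q + x^2 * (y ^2 * Q)) =
          PowerSeries.X * (PowerSeries.C PowerSeries.X * Q)
          - PowerSeries.C (PowerSeries.C PowerSeries.X) * (PowerSeries.C PowerSeries.X * Q
            + PowerSeries.X * Q
            + PowerSeries.C (PowerSeries.X ^ 2) * (PowerSeries.X ^ 2 * Q)) := by
        simp only [x, y, ι, RingHom.comp_apply, map_pow]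
        ring
      rw [hR, hL] at hfe
      have h := congrArg (PowerSeries.coeff (j+1)) hfe
      simp only [map_sub, map_add, PowerSeries.coeff_succ_X_mul, PowerSeries.coeff_C_mul,
        PowerSeries.coeff_succ_C, PowerSeries.coeff_map, PowerSeries.coeff_X_pow_mul'] at h
      have h' := congrArg (PowerSeries.coeff (i+1)) h
      simp only [map_sub, map_add, PowerSeries.coeff_succ_X_mul, PowerSeries.coeff_C_mul,
        PowerSeries.coeff_succ_C, PowerSeries.coeff_X_pow_mul', map_zero, sub_zero] at h'
      have e1 : PowerSeries.coeff (i+1) (PowerSeries.coeff j (PowerSeries.C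
          (PowerSeries.X : PowerSeries (PowerSeries ℚ)))) = if i = 0 ∧ j = 0 then 1 else 0 := by
        rw [PowerSeries.coeff_C]
        by_cases hj : j = 0
        · by_cases hi : i = 0
          · simp [hi, hj]
          · simp [hi, hj, PowerSeries.coeff_X]
        · simp [hj]
      rw [e1] at h'
      rw [← h']
      congr 3
      rcases i with _ | i <;> rcases j with _ | j <;> simp
    constructor
    · intro i j
      have h := congrArg PowerSeries.constantCoeff (hc i j)
      show PowerSeries.coeff 0 _ = _
      rw [PowerSeries.coeff_zero_eq_constantCoeff_apply]
      simp only [map_sub, map_mul, PowerSeries.constantCoeff_X, zero_mul, sub_zero] at h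
      rw [h]
      split_ifs <;> simp
    · intro i j n
      have h := congrArg (PowerSeries.coeff (n+1)) (hc i j)
      simp only [map_sub, map_add, PowerSeries.coeff_succ_X_mul] at h
      have e : PowerSeries.coeff (n+1) (if i = 0 ∧ j = 0 then (1 : PowerSeries ℚ) else 0) = 0 := by
        split_ifs <;> simp [PowerSeries.coeff_one]
      have e' : PowerSeries.coeff n (if 0 < i ∧ 0 < j then
          PowerSeries.coeff (i-1) (PowerSeries.coeff (j-1) Q) else 0) =
          if 0 < i ∧ 0 < j then
            PowerSeries.coeff n (PowerSeries.coeff (i-1) (PowerSeries.coeff (j-1) Q)) else 0 := by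
        split_ifs <;> simp
      rw [e, e'] at h
      linear_combination h

theorem kw_rec (V : PowerSeries ℚ)
    (hV : V = 1 + PowerSeries.X * (4 * PowerSeries.X ^ 2) * V ^ 3) (c : ℕ → ℚ)
    (hc : ∀ n, 2 * c n = PowerSeries.coeff n (V * (3 - V))) :
    c 0 = 1 ∧ ∀ n : ℕ, ((n:ℚ) + 2) * (2 * n + 3) * c (3 * (n + 1)) =
      6 * (3 * n + 1) * (3 * n + 2) * c (3 * n) := by
  have hcV : PowerSeries.constantCoeff V = 1 := by rw [hV]; simp
  have hC3 : PowerSeries.constantCoeff (3 : PowerSeries ℚ) = 3 := map_ofNat _ 3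
  have hC2 : PowerSeries.constantCoeff (2 : PowerSeries ℚ) = 2 := map_ofNat _ 2
  have hV0 : V ≠ 0 := by rintro h; rw [h] at hcV; simp at hcV
  have h3 : 3 - 2 * V ≠ 0 := by
    intro h
    have := congrArg PowerSeries.constantCoeff h
    simp only [map_sub, map_mul, hcV, hC3, hC2] at this
    norm_num at this
  have h2 : (2 : PowerSeries ℚ) ≠ 0 := by
    intro h; rw [h] at hC2; simp at hC2
  let d := PowerSeries.derivative ℚ
  let F : PowerSeries ℚ := PowerSeries.mk c
  have hF : 2 * F = V * (3 - V) := by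
    have : (2 : PowerSeries ℚ) = PowerSeries.C 2 := (map_ofNat _ 2).symm
    rw [this]
    ext n
    rw [PowerSeries.coeff_C_mul, PowerSeries.coeff_mk, hc]
  have dn : ∀ k : ℕ, d (k : PowerSeries ℚ) = 0 := fun k => Derivation.map_natCast d k
  have d2 : d 2 = 0 := dn 2
  have d3 : d 3 = 0 := dn 3
  have d4 : d 4 = 0 := dn 4
  have dX : d PowerSeries.X = 1 := PowerSeries.derivative_X
  let t : PowerSeries ℚ := PowerSeries.X
  let D := t * d V
  let F1 := t * d F
  let F2 := t * d F1
  have hV' : V = 1 + (4 * t ^ 3) * V ^ 3 := by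
    conv_lhs => rw [hV]
    simp only [t]; ring
  have hdV : d V = 12 * t ^ 2 * V ^ 3 + 12 * t ^ 3 * V ^ 2 * d V := by
    have h := congrArg d hV'
    simp only [map_add, Derivation.leibniz, Derivation.leibniz_pow, Derivation.map_one_eq_zero, d4,
      smul_eq_mul, t, dX, nsmul_eq_mul] at h
    simp only [t]
    push_cast at h
    linear_combination h
  have hD : (3 - 2 * V) * D = 3 * V * (V - 1) := by
    simp only [D]
    linear_combination t * V * hdV - (3 * V + 3 * t * d V) * hV'
  have hdF : 2 * d F = (3 - 2 * V) * d V := by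
    have h := congrArg d hF
    simp only [map_sub, Derivation.leibniz, d2, d3, smul_eq_mul] at h
    linear_combination h
  have hF1 : 2 * F1 = 3 * V * (V - 1) := by
    rw [← hD]; simp only [F1, D]; linear_combination t * hdF
  have hF2 : 2 * F2 = 3 * (2 * V - 1) * D := by
    have h := congrArg d hF1
    simp only [map_sub, Derivation.leibniz, d2, d3, smul_eq_mul, Derivation.map_one_eq_zero] at h
    simp only [F2, D]
    linear_combination t * h
  have hode := kw_ode h2 V (4 * t ^ 3) D hV' hV0 h3 hD F F1 F2 hF hF1 hF2
  have cF1 : ∀ n, PowerSeries.coeff n F1 = n * c n := by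
    intro n
    rcases n with _ | n
    · simp [F1, t]
    · simp only [F1, t, d, PowerSeries.coeff_succ_X_mul, PowerSeries.coeff_derivative, F,
        PowerSeries.coeff_mk]
      push_cast; ring
  have cF2 : ∀ n, PowerSeries.coeff n F2 = n ^ 2 * c n := by
    intro n
    rcases n with _ | n
    · simp [F2, t]
    · simp only [F2, t, d, PowerSeries.coeff_succ_X_mul, PowerSeries.coeff_derivative, cF1]
      push_cast; ring
  have cF : ∀ n, PowerSeries.coeff n F = c n := fun n => PowerSeries.coeff_mk _ _
  constructor
  · have := hc 0
    rw [PowerSeries.coeff_zero_eq_constantCoeff_apply] at this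
    simp only [map_mul, map_sub, hcV, hC3] at this
    linarith
  · intro n
    have hode' : PowerSeries.C 4 * F2 + PowerSeries.C 18 * F1 + PowerSeries.C 18 * F -
        PowerSeries.X ^ 3 * (PowerSeries.C 108 * F2 + PowerSeries.C 324 * F1
          + PowerSeries.C 216 * F) = PowerSeries.C 18 := by
      simp only [map_ofNat]
      simp only [t] at hode
      linear_combination hode
    have h := congrArg (PowerSeries.coeff (3 * n + 2 + 1)) hode'
    rw [PowerSeries.coeff_succ_C] at h
    rw [map_sub, show 3 * n + 2 + 1 = 3 * n + 3 from rfl, PowerSeries.coeff_X_pow_mul] at h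
    simp only [map_add, PowerSeries.coeff_C_mul, cF, cF1, cF2] at h
    rw [show 3 * (n + 1) = 3 * n + 3 by ring]
    push_cast at h
    linear_combination h / 18

theorem kw_value (c : ℕ → ℚ) (h0 : c 0 = 1) (h : ∀ n : ℕ, ((n:ℚ) + 2) * (2 * n + 3) * c (3 * (n + 1)) =
      6 * (3 * n + 1) * (3 * n + 2) * c (3 * n)) (n : ℕ) :
    c (3 * (n + 1)) = 2 * 27 ^ n * (ascPochhammer ℚ n).eval (4/3) *
          (ascPochhammer ℚ n).eval (5/3) /
        ((ascPochhammer ℚ n).eval (5/2) * (ascPochhammer ℚ n).eval 3) := by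
  induction n with
  | zero =>
    have := h 0
    simp only [Nat.mul_zero, h0] at this
    norm_num at this ⊢
    linarith
  | succ n ih =>
    have h1 := h (n+1)
    rw [ih] at h1
    have p1 : (ascPochhammer ℚ n).eval (5/2) ≠ 0 := (ascPochhammer_pos n _ (by norm_num)).ne'
    have p2 : (ascPochhammer ℚ n).eval 3 ≠ 0 := (ascPochhammer_pos n _ (by norm_num)).ne'
    have e1 : (5/2 + (n:ℚ)) ≠ 0 := by positivity
    have e2 : (3 + (n:ℚ)) ≠ 0 := by positivity
    have e3 : (((n+1:ℕ):ℚ) + 2) * (2 * ((n+1:ℕ):ℚ) + 3) ≠ 0 := by positivity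
    apply mul_left_cancel₀ e3
    rw [h1]
    simp only [ascPochhammer_succ_eval]
    push_cast
    field_simp
    ring

/-- The admissibility predicate. -/
def kwP (S : Set (ℤ × ℤ)) (m : ℕ) (e : ℤ × ℤ) (f : Fin m → ℤ × ℤ) : Prop :=
    (∀ i, f i ∈ S) ∧
    (∀ k : ℕ,
      0 ≤ (∑ i ∈ Finset.univ.filter (fun i : Fin m => (i : ℕ) < k), f i).1 ∧
      0 ≤ (∑ i ∈ Finset.univ.filter (fun i : Fin m => (i : ℕ) < k), f i).2) ∧
    (∑ i, f i) = e

theorem kw_finite (S : Finset (ℤ × ℤ)) (m : ℕ) (e : ℤ × ℤ) :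
    Finite {f : Fin m → ℤ × ℤ // kwP S m e f} := by
  apply Finite.of_injective (β := Fin m → S) (fun f i => ⟨f.1 i, f.2.1 i⟩)
  intro f g h
  ext1; funext i
  exact congrArg Subtype.val (congrFun h i)

theorem kwP_snoc (S : Set (ℤ × ℤ)) (m : ℕ) (e s : ℤ × ℤ) (f : Fin m → ℤ × ℤ)
    (he : 0 ≤ e.1 ∧ 0 ≤ e.2) :
    kwP S (m+1) e (Fin.snoc f s : Fin (m+1) → ℤ × ℤ) ↔ s ∈ S ∧ kwP S m (e - s) f := by
  have hle : ∀ k, k ≤ m →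
      (∑ i ∈ Finset.univ.filter (fun i : Fin (m+1) => (i : ℕ) < k),
        (Fin.snoc f s : Fin (m+1) → ℤ × ℤ) i) =
      ∑ i ∈ Finset.univ.filter (fun i : Fin m => (i : ℕ) < k), f i := by
    intro k hk
    rw [Finset.sum_filter, Finset.sum_filter, Fin.sum_univ_castSucc]
    simp [Nat.not_lt.2 hk]
  have hgt : ∀ {m : ℕ} (k) (g : Fin m → ℤ × ℤ), m ≤ k →
      (∑ i ∈ Finset.univ.filter (fun i : Fin m => (i : ℕ) < k), g i) = ∑ i, g i := by
    intro m k g hk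
    rw [Finset.filter_true_of_mem]
    intro i _
    omega
  have htot : (∑ i, (Fin.snoc f s : Fin (m+1) → ℤ × ℤ) i) = (∑ i, f i) + s := by
    rw [Fin.sum_univ_castSucc]; simp
  unfold kwP
  rw [htot, eq_sub_iff_add_eq, Fin.forall_fin_succ']
  simp only [Fin.snoc_castSucc, Fin.snoc_last]
  constructor
  · rintro ⟨⟨h1, h2⟩, h3, h4⟩
    refine ⟨h2, h1, fun k => ?_, h4⟩
    rcases le_total k m with hk | hk
    · have := h3 k
      rwa [hle k hk] at this
    · have := h3 m
      rw [hle m le_rfl] at this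
      rwa [hgt k f hk, ← hgt m f le_rfl]
  · rintro ⟨h2, h1, h3, h4⟩
    refine ⟨⟨h1, h2⟩, fun k => ?_, h4⟩
    rcases Nat.lt_or_ge m k with hk | hk
    · rw [hgt k _ hk, htot, h4]; exact he
    · rw [hle k hk]; exact h3 k

theorem kw_step (S : Finset (ℤ × ℤ)) (m : ℕ) (e : ℤ × ℤ) (he : 0 ≤ e.1 ∧ 0 ≤ e.2) :
    qpWalks S (m+1) e = ∑ s ∈ S, qpWalks S m (e - s) := by
  have eqv : {f : Fin (m+1) → ℤ × ℤ // kwP S (m+1) e f} ≃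
      Σ s : S, {f : Fin m → ℤ × ℤ // kwP S m (e - s) f} :=
    { toFun := fun f =>
        have h := (kwP_snoc S m e (f.1 (Fin.last m)) (Fin.init f.1) he).1
          (by rw [Fin.snoc_init_self]; exact f.2)
        ⟨⟨f.1 (Fin.last m), h.1⟩, ⟨Fin.init f.1, h.2⟩⟩
      invFun := fun p => ⟨Fin.snoc p.2.1 p.1.1, (kwP_snoc S m e _ _ he).2 ⟨p.1.2, p.2.2⟩⟩
      left_inv := by
        intro f
        ext1
        exact Fin.snoc_init_self _
      right_inv := by
        rintro ⟨⟨s, hs⟩, ⟨f, hf⟩⟩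
        have h1 : (Fin.snoc f s : Fin (m+1) → ℤ × ℤ) (Fin.last m) = s := Fin.snoc_last _ _
        have h2 : Fin.init (Fin.snoc f s : Fin (m+1) → ℤ × ℤ) = f := Fin.init_snoc _ _
        refine Sigma.ext (Subtype.ext h1) ?_
        simp only
        refine (Subtype.heq_iff_coe_eq ?_).2 h2
        intro g
        rw [h1] }
  have := fun s : S => kw_finite S m (e - s)
  have h := Nat.card_congr eqv
  rw [Nat.card_sigma] at h
  refine h.trans ?_
  rw [← Finset.sum_coe_sort S]
  rfl

theorem kw_out (S : Set (ℤ × ℤ)) (m : ℕ) (e : ℤ × ℤ) (he : ¬ (0 ≤ e.1 ∧ 0 ≤ e.2)) :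
    qpWalks S m e = 0 := by
  unfold qpWalks
  rw [Nat.card_eq_zero]
  left
  constructor
  rintro ⟨f, -, h2, h3⟩
  apply he
  have := h2 m
  rw [Finset.filter_true_of_mem (fun i _ => i.2), h3] at this
  exact this

theorem kw_zero (S : Set (ℤ × ℤ)) (e : ℤ × ℤ) : qpWalks S 0 e = if e = 0 then 1 else 0 := by
  unfold qpWalks
  split_ifs with h
  · subst h
    rw [Nat.card_eq_one_iff_unique]
    exact ⟨⟨fun a b => Subtype.ext (Subsingleton.elim _ _)⟩, ⟨⟨Fin.elim0, by simp⟩⟩⟩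
  · rw [Nat.card_eq_zero]
    left
    constructor
    rintro ⟨f, -, -, h3⟩
    simp at h3
    exact h h3.symm

theorem kw_count (q : ℕ → ℕ → ℕ → ℚ)
    (h0 : ∀ i j, q i j 0 = if i = 0 ∧ j = 0 then 1 else 0)
    (h1 : ∀ i j n, q i j (n+1) = q (i+1) j n + q i (j+1) n +
      (if 0 < i ∧ 0 < j then q (i-1) (j-1) n else 0)) (n i j : ℕ) :
    (qpWalks {(-1,0), (0,-1), (1,1)} n ((i:ℤ), (j:ℤ)) : ℚ) = q i j n := by
  induction n generalizing i j with
  | zero =>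
    rw [kw_zero, h0]
    simp [Prod.ext_iff]
  | succ n ih =>
    have hS : ({(-1,0), (0,-1), (1,1)} : Set (ℤ × ℤ)) =
      (({(-1,0), (0,-1), (1,1)} : Finset (ℤ × ℤ)) : Set (ℤ × ℤ)) := by simp
    rw [h1, hS, kw_step _ _ _ ⟨Int.natCast_nonneg _, Int.natCast_nonneg _⟩, ← hS]
    rw [Finset.sum_insert (by decide), Finset.sum_insert (by decide), Finset.sum_singleton]
    push_cast
    have a1 : ((i:ℤ),(j:ℤ)) - (-1,0) = (((i+1:ℕ):ℤ), (j:ℤ)) := by ext <;> simp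
    have a2 : ((i:ℤ),(j:ℤ)) - (0,-1) = ((i:ℤ), ((j+1:ℕ):ℤ)) := by ext <;> simp
    rw [a1, a2, ih, ih, add_assoc]
    congr 2
    split_ifs with h
    · have a3 : ((i:ℤ),(j:ℤ)) - (1,1) = (((i-1:ℕ):ℤ), ((j-1:ℕ):ℤ)) := by
        ext <;> simp <;> omega
      rw [a3, ih]
    · rw [kw_out]
      · simp
      · intro h'
        simp only [Prod.mk_sub_mk] at h'
        omega

theorem kw_rev (S S' : Set (ℤ × ℤ)) (hS : ∀ s ∈ S, -s ∈ S') (m : ℕ) (f : Fin m → ℤ × ℤ)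
    (hf : kwP S m (0,0) f) : kwP S' m (0,0) (fun i => - f i.rev) := by
  obtain ⟨h1, h2, h3⟩ := hf
  have key : ∀ k, (∑ i ∈ Finset.univ.filter (fun i : Fin m => (i : ℕ) < k), - f i.rev) =
      ∑ i ∈ Finset.univ.filter (fun i : Fin m => (i : ℕ) < m - k), f i := by
    intro k
    rw [Finset.sum_neg_distrib, neg_eq_iff_add_eq_zero]
    have e : (∑ i ∈ Finset.univ.filter (fun i : Fin m => (i : ℕ) < k), f i.rev) =
        ∑ i ∈ Finset.univ.filter (fun i : Fin m => ¬ (i : ℕ) < m - k), f i := by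
      rw [Finset.sum_filter, Finset.sum_filter]
      refine Fintype.sum_equiv Fin.revPerm _ _ ?_
      intro i
      simp only [Fin.revPerm_apply, Fin.val_rev]
      have : ((i:ℕ) < k) ↔ ¬ (m - ((i:ℕ) + 1) < m - k) := by omega
      simp only [this]
    rw [e, add_comm, Finset.sum_filter_add_sum_filter_not, h3]
    rfl
  refine ⟨fun i => hS _ (h1 _), fun k => ?_, ?_⟩
  · rw [key]; exact h2 _
  · rw [Finset.sum_neg_distrib, Fintype.sum_equiv Fin.revPerm (fun i => f i.rev) f (fun i => rfl), h3]
    rfl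

theorem kw_symm (m : ℕ) : qpWalks {(0,1), (1,0), (-1,-1)} m (0, 0) =
      qpWalks {(-1,0), (0,-1), (1,1)} m (0, 0) := by
  have hA : ∀ s ∈ ({(0,1), (1,0), (-1,-1)} : Set (ℤ × ℤ)),
      -s ∈ ({(-1,0), (0,-1), (1,1)} : Set (ℤ × ℤ)) := by
    rintro s (rfl | rfl | rfl) <;> simp
  have hB : ∀ s ∈ ({(-1,0), (0,-1), (1,1)} : Set (ℤ × ℤ)),
      -s ∈ ({(0,1), (1,0), (-1,-1)} : Set (ℤ × ℤ)) := by
    rintro s (rfl | rfl | rfl) <;> simp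
  refine Nat.card_congr
    { toFun := fun f => ⟨_, kw_rev _ _ hA m f.1 f.2⟩
      invFun := fun f => ⟨_, kw_rev _ _ hB m f.1 f.2⟩
      left_inv := ?_
      right_inv := ?_ }
  · intro f; ext1; funext i; simp
  · intro f; ext1; funext i; simp

theorem closed_walks_step_sets_5_and_6 (n : ℕ) (hn : 1 ≤ n) :
    qpWalks {(0,1), (1,0), (-1,-1)} (3 * n) (0, 0) =
      qpWalks {(-1,0), (0,-1), (1,1)} (3 * n) (0, 0) ∧
    (qpWalks {(0,1), (1,0), (-1,-1)} (3 * n) (0, 0) : ℚ) =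
      2 * 27 ^ (n - 1) * (ascPochhammer ℚ (n - 1)).eval (4/3) *
          (ascPochhammer ℚ (n - 1)).eval (5/3) /
        ((ascPochhammer ℚ (n - 1)).eval (5/2) * (ascPochhammer ℚ (n - 1)).eval 3) := by
  refine ⟨kw_symm _, ?_⟩
  rw [kw_symm]
  obtain ⟨q, V, hV, h1, h2, h3⟩ := kw_series
  obtain ⟨c0, hc⟩ := kw_rec V hV (fun n => q 0 0 n) h1
  obtain ⟨n, rfl⟩ := Nat.exists_eq_add_of_le' hn
  have := kw_count q h2 h3 (3 * (n+1)) 0 0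
  simp only [Nat.cast_zero] at this
  rw [this, Nat.add_sub_cancel]
  exact kw_value (fun n => q 0 0 n) c0 hc n
end

section
/- For all n ≥ 0, the number of closed quarter-plane walks of length 2n with Gessel's step set S = {(-1,0),(1,0),(-1,-1),(1,1)} equals 16^n (5/6)_n (1/2)_n / ((2)_n (5/3)_n), and there are no closed walks of odd length. -/
open Finset

namespace Gessel

open PowerSeries in
/-- Extension of a ring hom to power series, sending `t` to `t`. -/
noncomputable def extFun {P : Type*} [CommRing P] (ψ : P →+* PowerSeries ℚ)
    (f : PowerSeries P) : PowerSeries ℚ :=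
  PowerSeries.mk fun m => ∑ i ∈ range (m + 1), coeff m (ψ (coeff i f) * X ^ i)

theorem ps_eq_of_dvd {f g : PowerSeries ℚ} (h : ∀ n, (PowerSeries.X : PowerSeries ℚ) ^ n ∣ f - g) :
    f = g := by
  ext n
  have := (PowerSeries.X_pow_dvd_iff.1 (h (n + 1))) n (by omega)
  rw [map_sub] at this
  linarith

section
variable {P : Type*} [CommRing P] (ψ : P →+* PowerSeries ℚ)

open PowerSeries

theorem extFun_dvd (f : PowerSeries P) (N : ℕ) :
    (X : PowerSeries ℚ) ^ N ∣ extFun ψ f - ∑ i ∈ range N, ψ (coeff i f) * X ^ i := by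
  rw [X_pow_dvd_iff]
  intro m hm
  rw [map_sub, map_sum, extFun, coeff_mk, sub_eq_zero]
  apply Finset.sum_subset
  · intro i; simp only [Finset.mem_range]; omega
  · intro i hi hi'
    simp only [Finset.mem_range] at hi hi'
    rw [coeff_mul_X_pow']
    rw [if_neg (by omega)]

theorem extFun_add (f g : PowerSeries P) : extFun ψ (f + g) = extFun ψ f + extFun ψ g := by
  ext m
  simp [extFun, add_mul, Finset.sum_add_distrib]

theorem extFun_C_mul (p : P) (f : PowerSeries P) :
    extFun ψ (C p * f) = ψ p * extFun ψ f := by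
  apply ps_eq_of_dvd
  intro N
  have h1 := extFun_dvd ψ (C p * f) N
  have h2 := extFun_dvd ψ f N
  have h3 := dvd_sub h1 (h2.mul_left (ψ p))
  convert h3 using 1
  simp only [coeff_C_mul, map_mul, mul_sub, Finset.mul_sum, mul_assoc]
  ring

theorem extFun_X_mul (f : PowerSeries P) :
    extFun ψ (X * f) = X * extFun ψ f := by
  ext m
  cases m with
  | zero => simp [extFun]
  | succ m =>
    rw [coeff_succ_X_mul, extFun, extFun, coeff_mk, coeff_mk, Finset.sum_range_succ']
    simp only [coeff_succ_X_mul, coeff_zero_X_mul, map_zero, zero_mul, add_zero, pow_succ,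
      ← mul_assoc, coeff_succ_mul_X]

theorem extFun_C (p : P) : extFun ψ (C p) = ψ p := by
  have := extFun_C_mul ψ p 1
  rw [mul_one] at this
  rw [this]
  have : extFun ψ 1 = 1 := by
    ext m
    rw [extFun, coeff_mk, Finset.sum_range_succ']
    simp [coeff_one]
  rw [this, mul_one]

theorem extFun_mul (f g : PowerSeries P) : extFun ψ (f * g) = extFun ψ f * extFun ψ g := by
  apply ps_eq_of_dvd
  intro N
  induction N generalizing f with
  | zero => simp
  | succ N ih =>
    obtain ⟨f', hf⟩ : ∃ f' : PowerSeries P, f = X * f' + C (constantCoeff f) :=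
      ⟨_, eq_X_mul_shift_add_const f⟩
    obtain ⟨k, hk⟩ := ih f'
    refine ⟨k, ?_⟩
    rw [hf, add_mul, extFun_add, extFun_add, extFun_C, extFun_C_mul, mul_assoc, extFun_X_mul,
      extFun_X_mul, pow_succ]
    linear_combination X * hk

noncomputable def ext : PowerSeries P →+* PowerSeries ℚ where
  toFun := extFun ψ
  map_one' := by simpa using extFun_C ψ 1
  map_mul' := extFun_mul ψ
  map_zero' := by simpa using extFun_C ψ 0
  map_add' := extFun_add ψ

theorem ext_X : ext ψ X = X := by
  have := extFun_X_mul ψ 1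
  have h1 := (ext ψ).map_one
  change extFun ψ 1 = 1 at h1
  rw [mul_one, h1, mul_one] at this
  exact this

theorem ext_C (p : P) : ext ψ (C p) = ψ p := extFun_C ψ p

theorem ext_map {P' : Type*} [CommRing P'] (h : P' →+* P) (f : PowerSeries P') :
    ext ψ (PowerSeries.map h f) = ext (ψ.comp h) f := by
  change extFun _ _ = extFun _ _
  ext m
  simp [extFun]

theorem ext_const (ψ : ℚ →+* PowerSeries ℚ) (f : PowerSeries ℚ) : ext ψ f = f := by
  have : ψ = C := Subsingleton.elim _ _
  subst this
  change extFun _ _ = _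
  ext m
  simp only [extFun, coeff_mk, coeff_C_mul, coeff_X_pow]
  rw [Finset.sum_eq_single m] <;> simp
  intro b hb hb' h
  omega

theorem coeff_ext_const (f : PowerSeries (Polynomial ℚ)) (y : ℚ) (n : ℕ) :
    coeff n (ext (Polynomial.aeval (C y : PowerSeries ℚ) : Polynomial ℚ →ₐ[ℚ] PowerSeries ℚ).toRingHom f)
      = (coeff n f).eval y := by
  have : (Polynomial.aeval (C y : PowerSeries ℚ) : Polynomial ℚ →ₐ[ℚ] PowerSeries ℚ).toRingHom
     = (C : ℚ →+* _).comp (Polynomial.evalRingHom y) := by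
    ext <;> simp
  rw [this, ← ext_map, ext_const]
  simp

theorem X_dvd_constantCoeff {f : PowerSeries ℚ} : X ∣ f ↔ constantCoeff f = 0 := X_dvd_iff
end

section
open PowerSeries
/-- fixed points of quadratic contractions -/
theorem exists_fix (u v w : ℚ) : ∃ a : PowerSeries ℚ,
    a = X * (C u + C v * a + C w * a ^ 2) := by
  let F : PowerSeries ℚ → PowerSeries ℚ := fun a => X * (C u + C v * a + C w * a ^ 2)
  have hF : ∀ n a b, X ^ n ∣ a - b → X ^ (n + 1) ∣ F a - F b := by
    rintro n a b ⟨k, hk⟩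
    refine ⟨k * (C v + C w * (a + b)), ?_⟩
    simp only [F, pow_succ]
    linear_combination (X * (C v + C w * (a + b))) * hk
  have hs : ∀ n, X ^ n ∣ F^[n + 1] 0 - F^[n] 0 := by
    intro n
    induction n with
    | zero => simp
    | succ n ih =>
      rw [Function.iterate_succ_apply', Function.iterate_succ_apply' F n]
      rw [Function.iterate_succ_apply'] at ih
      exact hF _ _ _ ih
  have hs2 : ∀ n m, X ^ n ∣ F^[n + m] 0 - F^[n] 0 := by
    intro n m
    induction m with
    | zero => simp
    | succ m ih =>
      have := ((pow_dvd_pow X (Nat.le_add_right n m)).trans (hs (n + m))).add ih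
      simpa [add_assoc] using this
  let a : PowerSeries ℚ := PowerSeries.mk fun n => coeff n (F^[n + 1] 0)
  have ha : ∀ n, X ^ n ∣ a - F^[n] 0 := by
    intro n
    rw [X_pow_dvd_iff]
    intro m hm
    obtain ⟨k, rfl⟩ := Nat.exists_eq_add_of_lt hm
    have h := X_pow_dvd_iff.1 (hs2 (m + 1) k) m (by omega)
    rw [map_sub] at h ⊢
    simp only [a, coeff_mk]
    rw [show m + k + 1 = m + 1 + k by ring]
    linarith
  refine ⟨a, ps_eq_of_dvd fun n => ?_⟩
  change X ^ n ∣ a - F a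
  have h1 := (pow_dvd_pow X (Nat.le_succ n)).trans (ha (n + 1))
  have h2 := (pow_dvd_pow X (Nat.le_succ n)).trans (hF _ _ _ (ha n))
  rw [Function.iterate_succ_apply'] at h1
  have := dvd_sub h1 h2
  simpa using this

/-- evaluation at a power series -/
noncomputable def ev (a : PowerSeries ℚ) : PowerSeries (Polynomial ℚ) →+* PowerSeries ℚ :=
  ext (Polynomial.aeval a : Polynomial ℚ →ₐ[ℚ] PowerSeries ℚ).toRingHom

theorem ev_X (a : PowerSeries ℚ) : ev a X = X := ext_X _
theorem ev_x (a : PowerSeries ℚ) : ev a (C Polynomial.X) = a := by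
  rw [ev, ext_C]; simp
theorem ev_const (a : PowerSeries ℚ) (c : PowerSeries ℚ) :
    ev a (PowerSeries.map Polynomial.C c) = c := by
  rw [ev, ext_map, ext_const]

theorem poly_zero_of_eval (p : Polynomial ℚ) (h : ∀ y : ℚ, y ≠ 0 → y ≠ -1 → p.eval y = 0) :
    p = 0 := by
  apply Polynomial.eq_zero_of_infinite_isRoot
  apply Set.Infinite.mono (s := Set.Ioi (0:ℚ)) _ (Set.Ioi_infinite 0)
  intro y hy
  have : (0:ℚ) < y := hy
  exact h y (by linarith) (by linarith)

theorem dvd_of_eval (f : PowerSeries (Polynomial ℚ)) (m : ℕ)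
    (h : ∀ y : ℚ, y ≠ 0 → y ≠ -1 → X ^ m ∣ ev (C y) f) : X ^ m ∣ f := by
  rw [X_pow_dvd_iff]
  intro n hn
  apply poly_zero_of_eval
  intro y hy hy'
  have := X_pow_dvd_iff.1 (h y hy hy') n hn
  rwa [ev, coeff_ext_const] at this

theorem ev_X_pow (a : PowerSeries ℚ) (n : ℕ) : ev a (X ^ n) = X ^ n := by
  rw [map_pow, ev_X]

/-- the invariant lemma -/
theorem invariant_lemma (f g : PowerSeries (Polynomial ℚ))
    (h1 : ∀ y : ℚ, y ≠ 0 → y ≠ -1 → ∃ a, X ∣ a ∧ a * ev a f = ev (C y) g)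
    (h2 : ∀ x : ℚ, x ≠ 0 → ∃ b, C x * ev (C x) f = ev b g) : f = 0 := by
  have key : ∀ m, X ^ m ∣ f := by
    intro m
    induction m with
    | zero => simp
    | succ m ih =>
      obtain ⟨f', hf⟩ := ih
      have hg : X ^ (m + 1) ∣ g := by
        apply dvd_of_eval
        intro y hy hy'
        obtain ⟨a, ⟨a', ha⟩, hag⟩ := h1 y hy hy'
        rw [← hag, hf, map_mul, ev_X_pow]
        refine ⟨a' * ev a f', ?_⟩
        nth_rewrite 1 [ha]
        ring
      obtain ⟨g', hg'⟩ := hg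
      apply dvd_of_eval
      intro x hx _
      obtain ⟨b, hb⟩ := h2 x hx
      have h3 : ev (C x) f = C x⁻¹ * ev b g := by
        rw [← hb, ← mul_assoc, ← map_mul, inv_mul_cancel₀ hx, map_one, one_mul]
      rw [h3, hg', map_mul, ev_X_pow]
      exact ⟨C x⁻¹ * ev b g', by ring⟩
  ext1 n
  exact X_pow_dvd_iff.1 (key (n + 1)) n (by omega)
end
end Gessel




namespace Gessel

def good (S : Set (ℤ × ℤ)) (m : ℕ) (e : ℤ × ℤ) (f : Fin m → ℤ × ℤ) : Prop :=
    (∀ i, f i ∈ S) ∧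
    (∀ k : ℕ,
      0 ≤ (∑ i ∈ Finset.univ.filter (fun i : Fin m => (i : ℕ) < k), f i).1 ∧
      0 ≤ (∑ i ∈ Finset.univ.filter (fun i : Fin m => (i : ℕ) < k), f i).2) ∧
    (∑ i, f i) = e

theorem good_succ (S : Set (ℤ × ℤ)) (m : ℕ) (e : ℤ × ℤ) (he : 0 ≤ e.1 ∧ 0 ≤ e.2)
    (f : Fin (m + 1) → ℤ × ℤ) :
    good S (m + 1) e f ↔ f (Fin.last m) ∈ S ∧ good S m (e - f (Fin.last m)) (Fin.init f) := by
  have hsum : ∀ k, k ≤ m → ∑ i ∈ Finset.univ.filter (fun i : Fin (m + 1) => (i : ℕ) < k), f i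
      = ∑ i ∈ Finset.univ.filter (fun i : Fin m => (i : ℕ) < k), Fin.init f i := by
    intro k hk
    rw [Finset.sum_filter, Finset.sum_filter, Fin.sum_univ_castSucc]
    simp [Fin.init, hk]
  have hsum' : ∀ k, m ≤ k → ∑ i ∈ Finset.univ.filter (fun i : Fin m => (i : ℕ) < k), Fin.init f i
      = ∑ i ∈ Finset.univ.filter (fun i : Fin m => (i : ℕ) < m), Fin.init f i := by
    intro k hk
    congr 1
    ext i
    have := i.2
    simp only [Finset.mem_filter, Finset.mem_univ, true_and]
    omega
  have hfull : ∀ k, m < k → ∑ i ∈ Finset.univ.filter (fun i : Fin (m + 1) => (i : ℕ) < k), f i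
      = ∑ i, f i := by
    intro k hk
    congr 1
    ext i
    have := i.2
    simp only [Finset.mem_filter, Finset.mem_univ, true_and, iff_true]
    omega
  have htot : (∑ i, f i) = e ↔ (∑ i, Fin.init f i) = e - f (Fin.last m) := by
    rw [Fin.sum_univ_castSucc, eq_sub_iff_add_eq]
    rfl
  constructor
  · rintro ⟨h1, h2, h3⟩
    refine ⟨h1 _, fun i => h1 _, fun k => ?_, htot.1 h3⟩
    rcases le_total k m with hk | hk
    · rw [← hsum k hk]; exact h2 k
    · rw [hsum' k hk, ← hsum m le_rfl]; exact h2 m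
  · rintro ⟨h0, h1, h2, h3⟩
    refine ⟨fun i => ?_, fun k => ?_, htot.2 h3⟩
    · refine Fin.lastCases h0 (fun i => h1 i) i
    · rcases le_or_gt k m with hk | hk
      · rw [hsum k hk]; exact h2 k
      · rw [hfull k hk, htot.2 h3]; exact he

theorem finite_good (S : Finset (ℤ × ℤ)) (m : ℕ) (e : ℤ × ℤ) : Finite {f // good (S : Set (ℤ × ℤ)) m e f} := by
  have : Function.Injective (fun (f : {f // good (S : Set (ℤ × ℤ)) m e f}) => (fun i => (⟨f.1 i, by simpa using f.2.1 i⟩ : {s // s ∈ S}))) := by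
    intro f g h
    ext1; funext i
    have := congrFun h i
    simpa using this
  exact Finite.of_injective _ this

theorem qp_succ (S : Finset (ℤ × ℤ)) (m : ℕ) (e : ℤ × ℤ) (he : 0 ≤ e.1 ∧ 0 ≤ e.2) :
    qpWalks (S : Set (ℤ × ℤ)) (m + 1) e = ∑ s ∈ S, qpWalks (S : Set (ℤ × ℤ)) m (e - s) := by
  rw [← Finset.sum_coe_sort]
  have := finite_good S m
  have hc := Nat.card_sigma (β := fun s : {s // s ∈ S} => {f // good (S : Set (ℤ × ℤ)) m (e - s.1) f})
  refine Eq.trans ?_ hc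
  refine Nat.card_congr (α := {f // good (S : Set (ℤ × ℤ)) (m + 1) e f}) ?_
  refine
    { toFun := fun f => ⟨⟨f.1 (Fin.last m), by
          simpa using ((good_succ _ m e he f.1).1 f.2).1⟩,
        ⟨Fin.init f.1, ((good_succ _ m e he f.1).1 f.2).2⟩⟩
      invFun := fun p => ⟨Fin.snoc p.2.1 p.1.1, by
        rw [good_succ _ m e he]
        simp only [Fin.snoc_last, Fin.init_snoc]
        exact ⟨by simpa using p.1.2, p.2.2⟩⟩
      left_inv := ?_
      right_inv := ?_ }
  · intro f
    ext1
    exact Fin.snoc_init_self _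
  · rintro ⟨⟨s, hs⟩, ⟨f, hf⟩⟩
    apply Sigma.ext
    · simp
    · rw [Subtype.heq_iff_coe_eq]
      · simp
      · simp

theorem qp_out (S : Set (ℤ × ℤ)) (m : ℕ) (e : ℤ × ℤ) (he : ¬ (0 ≤ e.1 ∧ 0 ≤ e.2)) :
    qpWalks S m e = 0 := by
  unfold qpWalks
  rw [Nat.card_eq_zero]
  left
  refine ⟨fun f => he ?_⟩
  obtain ⟨f, h1, h2, h3⟩ := f
  have := h2 m
  rw [Finset.filter_true_of_mem (fun i _ => i.2), h3] at this
  exact this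

theorem qp_zero (S : Set (ℤ × ℤ)) (e : ℤ × ℤ) :
    qpWalks S 0 e = if e = 0 then 1 else 0 := by
  unfold qpWalks
  split_ifs with h
  · subst h
    rw [Nat.card_eq_one_iff_unique]
    refine ⟨⟨fun a b => ?_⟩, ⟨⟨fun i => i.elim0, ?_⟩⟩⟩
    · ext1; funext i; exact i.elim0
    · simp
  · rw [Nat.card_eq_zero]
    left
    refine ⟨fun f => h ?_⟩
    have := f.2.2.2
    simpa using this.symm

abbrev GS : Finset (ℤ × ℤ) := {(-1,0), (1,0), (-1,-1), (1,1)}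

/-- counts as rationals -/
noncomputable def q (n : ℕ) (i j : ℕ) : ℚ := (qpWalks (GS : Set (ℤ × ℤ)) n ((i : ℤ), (j : ℤ)) : ℚ)

/-- counts shifted down; zero outside -/
noncomputable def qz (n : ℕ) (i j : ℤ) : ℚ := (qpWalks (GS : Set (ℤ × ℤ)) n (i, j) : ℚ)

theorem qz_neg1 (n : ℕ) (j : ℤ) : qz n (-1) j = 0 := by
  rw [qz, qp_out]; simp; simp
theorem qz_neg2 (n : ℕ) (j : ℤ) : qz n j (-1) = 0 := by
  rw [qz, qp_out]; simp; simp

theorem q_succ (n i j : ℕ) : q (n + 1) i j = qz n (i + 1) j + qz n (i - 1) j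
    + qz n (i + 1) (j + 1) + qz n (i - 1) (j - 1) := by
  rw [q, qp_succ _ _ _ (by simp)]
  simp [qz, GS]
  ring

theorem q_succ_00 (n : ℕ) : q (n + 1) 0 0 = q n 1 0 + q n 1 1 := by
  rw [q_succ]; simp [qz_neg1]; simp [qz, q]
theorem q_succ_0s (n j : ℕ) : q (n + 1) 0 (j + 1) = q n 1 (j + 1) + q n 1 (j + 2) := by
  rw [q_succ]; simp [qz_neg1]; simp [qz, q, add_assoc]
theorem q_succ_s0 (n i : ℕ) : q (n + 1) (i + 1) 0 = q n (i + 2) 0 + q n i 0 + q n (i + 2) 1 := by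
  rw [q_succ]; simp [qz_neg2]; simp [qz, q, add_assoc]
theorem q_succ_ss (n i j : ℕ) : q (n + 1) (i + 1) (j + 1)
    = q n (i + 2) (j + 1) + q n i (j + 1) + q n (i + 2) (j + 2) + q n i j := by
  rw [q_succ]; simp [qz, q, add_assoc]

theorem q_zero (i j : ℕ) : q 0 i j = if i = 0 ∧ j = 0 then 1 else 0 := by
  rw [q, qp_zero]; simp [Prod.ext_iff]

theorem q_big (n i j : ℕ) (h : n < i ∨ n < j) : q n i j = 0 := by
  induction n generalizing i j with
  | zero => rw [q_zero]; simp; omega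
  | succ n ih =>
    rcases i with _ | i <;> rcases j with _ | j
    · omega
    · rw [q_succ_0s, ih, ih] <;> first | omega | simp
    · rw [q_succ_s0, ih, ih, ih] <;> first | omega | simp
    · rw [q_succ_ss, ih, ih, ih, ih] <;> first | omega | simp

open Polynomial in
noncomputable def Qp (n : ℕ) : Polynomial (Polynomial ℚ) :=
  ∑ j ∈ range (n + 1), (∑ i ∈ range (n + 1), Polynomial.C (q n i j) * X ^ i : Polynomial ℚ) • X ^ j

theorem coeff_Qp (n i j : ℕ) : ((Qp n).coeff j).coeff i = q n i j := by
  simp only [Qp, Polynomial.finsetSum_coeff, Polynomial.coeff_smul, Polynomial.coeff_X_pow,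
    smul_eq_mul, mul_ite, mul_one, mul_zero, Finset.sum_ite_eq, Finset.mem_range]
  split_ifs with h
  · simp only [Polynomial.finsetSum_coeff, Polynomial.coeff_C_mul, Polynomial.coeff_X_pow,
      mul_ite, mul_one, mul_zero, Finset.sum_ite_eq, Finset.mem_range]
    split_ifs with h'
    · rfl
    · rw [q_big]; omega
  · rw [q_big]; simp; omega

noncomputable def Qxp (n : ℕ) : Polynomial ℚ := (Qp n).coeff 0
theorem coeff_Qxp (n i : ℕ) : (Qxp n).coeff i = q n i 0 := coeff_Qp n i 0

noncomputable def Qyp (n : ℕ) : Polynomial ℚ := (Qp n).map (Polynomial.constantCoeff)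
theorem coeff_Qyp (n j : ℕ) : (Qyp n).coeff j = q n 0 j := by
  simp [Qyp, coeff_Qp]

open Polynomial in
theorem Q_rec (n : ℕ) : (Polynomial.C X : Polynomial (Polynomial ℚ)) * X * Qp (n + 1)
    = (1 + X) * (1 + Polynomial.C X ^ 2 * X) * Qp n - Polynomial.C (Qxp n)
      - (1 + X) * (Qyp n).map Polynomial.C + Polynomial.C (Polynomial.C (q n 0 0)) := by
  have e1 : (1 + X) * (1 + Polynomial.C X ^ 2 * X) * Qp n - Polynomial.C (Qxp n)
      - (1 + X) * (Qyp n).map Polynomial.C + Polynomial.C (Polynomial.C (q n 0 0))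
     = Qp n + X * Qp n + Polynomial.C (X * X) * (X * Qp n) + Polynomial.C (X * X) * (X * (X * Qp n))
      - Polynomial.C (Qxp n)
      - (Qyp n).map Polynomial.C - X * (Qyp n).map Polynomial.C
      + Polynomial.C (Polynomial.C (q n 0 0)) := by
    rw [Polynomial.C_mul]; ring
  rw [e1]
  ext j i
  rw [show (Polynomial.C X : Polynomial (Polynomial ℚ)) * X * Qp (n + 1)
    = Polynomial.C X * (X * Qp (n + 1)) by ring]
  rcases j with _ | _ | j <;> rcases i with _ | _ | _ | i <;>
  simp [mul_assoc, coeff_Qp, coeff_Qxp, coeff_Qyp, coeff_C_succ, coeff_C_zero,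
    Polynomial.coeff_X_mul, coeff_X_mul_zero, coeff_C, q_succ_00, q_succ_0s, q_succ_s0, q_succ_ss] <;> ring

theorem Qp_zero : Qp 0 = 1 := by
  simp [Qp, q_zero]

end Gessel


namespace Gessel
section
open PowerSeries

abbrev PS := PowerSeries ℚ
abbrev PX := PowerSeries (Polynomial ℚ)

noncomputable def QQ : PowerSeries (Polynomial (Polynomial ℚ)) := PowerSeries.mk Qp
noncomputable def Qx : PX := PowerSeries.mk Qxp
noncomputable def Qy : PX := PowerSeries.mk Qyp
noncomputable def Q0 : PS := PowerSeries.mk fun n => q n 0 0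
noncomputable def q1 : PS := PowerSeries.mk fun n => q n 1 0

theorem func_eq : (C (Polynomial.C Polynomial.X * Polynomial.X) : PowerSeries (Polynomial (Polynomial ℚ))) * QQ
    = X * (C ((1 + Polynomial.X) * (1 + Polynomial.C Polynomial.X ^ 2 * Polynomial.X)) * QQ
      - PowerSeries.map Polynomial.C Qx
      - C (1 + Polynomial.X) * PowerSeries.map (Polynomial.mapRingHom Polynomial.C) Qy
      + PowerSeries.map (Polynomial.C.comp Polynomial.C) Q0)
      + C (Polynomial.C Polynomial.X * Polynomial.X) := by
  ext1 n
  rcases n with _ | n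
  · simp [QQ, Qp_zero]
  · rw [map_add, coeff_succ_X_mul, coeff_C_mul, map_add, map_sub, map_sub, coeff_C_mul, coeff_C_mul]
    simp only [coeff_map, QQ, Qx, Qy, Q0, coeff_mk]
    rw [Q_rec]
    simp [coeff_C]

noncomputable def psi (a b : PS) : Polynomial (Polynomial ℚ) →+* PS :=
  Polynomial.eval₂RingHom (Polynomial.aeval a : Polynomial ℚ →ₐ[ℚ] PS).toRingHom b

theorem func_eq_ev (a b : PS) : ∃ v : PS,
    (a * b - X * (1 + b) * (1 + a ^ 2 * b)) * v
      = a * b - X * ev a Qx - X * (1 + b) * ev b Qy + X * Q0 := by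
  refine ⟨ext (psi a b) QQ, ?_⟩
  have h := congrArg (ext (psi a b)) func_eq
  have e1 : ext (psi a b) (PowerSeries.map Polynomial.C Qx) = ev a Qx := by
    rw [ext_map, ev]; congr 2; apply Polynomial.ringHom_ext <;> simp [psi]
  have e2 : ext (psi a b) (PowerSeries.map (Polynomial.mapRingHom Polynomial.C) Qy) = ev b Qy := by
    rw [ext_map, ev]; congr 2; apply Polynomial.ringHom_ext <;> simp [psi]
  have e3 : ext (psi a b) (PowerSeries.map (Polynomial.C.comp Polynomial.C) Q0) = Q0 := by
    rw [ext_map, ext_const]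
  simp only [map_mul, map_add, map_sub, map_one, map_pow, ext_X, ext_C, e1, e2, e3] at h
  have e4 : psi a b (Polynomial.C Polynomial.X) = a := by simp [psi]
  have e5 : psi a b Polynomial.X = b := by simp [psi]
  simp only [e4, e5] at h
  linear_combination h

noncomputable abbrev io : PS →+* PX := PowerSeries.map Polynomial.C
noncomputable abbrev xx : PX := C Polynomial.X

theorem split_at (f : PX) (c : ℚ) : ∃ g : PX,
    f = io (PowerSeries.map (Polynomial.evalRingHom c) f) + (xx - C (Polynomial.C c)) * g := by
  refine ⟨PowerSeries.mk fun n => coeff n f /ₘ (Polynomial.X - Polynomial.C c), ?_⟩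
  rw [← map_sub]
  ext1 n
  rw [map_add, coeff_C_mul]
  simp only [coeff_map, coeff_mk]
  have := Polynomial.modByMonic_add_div (coeff n f) (Polynomial.X - Polynomial.C c)
  rw [Polynomial.modByMonic_X_sub_C_eq_C_eval] at this
  exact this.symm

theorem split0 (f : PX) : ∃ g : PX,
    f = io (PowerSeries.map (Polynomial.evalRingHom 0) f) + xx * g := by
  obtain ⟨g, hg⟩ := split_at f 0
  exact ⟨g, by simpa using hg⟩

theorem map_io (c : PS) (z : ℚ) : PowerSeries.map (Polynomial.evalRingHom z) (io c) = c := by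
  ext n; simp [io]

theorem Qx_split : ∃ (q2 : PS) (W : PX),
    Qx = io Q0 + xx * io q1 + xx ^ 2 * io q2 + xx ^ 3 * W := by
  obtain ⟨f1, h1⟩ := split0 Qx
  obtain ⟨f2, h2⟩ := split0 f1
  obtain ⟨f3, h3⟩ := split0 f2
  have e0 : PowerSeries.map (Polynomial.evalRingHom 0) Qx = Q0 := by
    ext n; simp [Qx, Q0, ← Polynomial.coeff_zero_eq_eval_zero, coeff_Qxp]
  have e1 : PowerSeries.map (Polynomial.evalRingHom 0) f1 = q1 := by
    ext n
    have := congrArg (fun p => (coeff n p).coeff 1) h1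
    simp only [map_add, coeff_C_mul, coeff_map, Polynomial.coeff_add, Polynomial.coeff_C_succ,
      Polynomial.coeff_X_mul, zero_add, Qx, coeff_mk, coeff_Qxp] at this
    simp [q1, ← Polynomial.coeff_zero_eq_eval_zero, ← this]
  refine ⟨PowerSeries.map (Polynomial.evalRingHom 0) f2, f3, ?_⟩
  rw [e0] at h1; rw [e1] at h2
  linear_combination h1 + xx * h2 + xx ^ 2 * h3

theorem Qy_split0 : ∃ U : PX, Qy = io Q0 + xx * U := by
  obtain ⟨f1, h1⟩ := split0 Qy
  have e0 : PowerSeries.map (Polynomial.evalRingHom 0) Qy = Q0 := by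
    ext n; simp [Qy, Q0, ← Polynomial.coeff_zero_eq_eval_zero, coeff_Qyp]
  rw [e0] at h1
  exact ⟨f1, h1⟩

theorem Qy_eval (n : ℕ) : (Qyp (n + 1)).eval (-1) = q n 1 0 := by
  have h := congrArg (fun p => (p.eval (-1)).coeff 1) (Q_rec n)
  simp [coeff_Qxp] at h
  have e : (Qyp (n + 1)).eval (-1) = ((Qp (n + 1)).eval (-1)).coeff 0 := by
    rw [Qyp, Polynomial.eval_map]
    have := Polynomial.eval₂_hom (p := Qp (n + 1)) Polynomial.constantCoeff (-1)
    rw [map_neg, map_one] at this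
    rw [this]; rfl
  rw [e]
  linarith

theorem Qy_split1 : ∃ V : PX, Qy = 1 + X * io q1 + (1 + xx) * V := by
  obtain ⟨f1, h1⟩ := split_at Qy (-1)
  have e0 : PowerSeries.map (Polynomial.evalRingHom (-1)) Qy = 1 + X * q1 := by
    ext n
    rcases n with _ | n
    · simp [Qy, Qyp, Qp_zero]
    · rw [map_add, coeff_succ_X_mul]
      simp [Qy, Qy_eval, q1, coeff_one]
  rw [e0] at h1
  refine ⟨f1, ?_⟩
  have e1 : (C (Polynomial.C (-1 : ℚ)) : PX) = -1 := by simp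
  rw [map_add, map_mul, map_one, map_X, e1] at h1
  linear_combination h1
end
end Gessel


namespace Gessel
section
open PowerSeries

/-- The polynomial relation in terms of `y = 1 + t x Q(x,0)`. -/
def rel {A : Type*} [CommRing A] (t β δ ε x y : A) : A :=
  y * (x + x ^ 3 - t - t * x ^ 4) + t * y ^ 3 - β * x * y ^ 2 - δ * x ^ 2 * y - ε * x ^ 3

theorem rel_x {A : Type*} [CommRing A] (t x u v z W p Y β δ ε R4 c4 c5 c6 : A)
    (hp : p = 1 + u * x + v * x ^ 2 + z * x ^ 3)
    (hY : Y = p + x ^ 4 * W)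
    (hβ : β = 1 + 2 * t * u) (hδ : δ = 2 * t * v - u - t * u ^ 2)
    (hε : ε = (-t * z + v + 1) + t * (3 * z + 6 * u * v + u ^ 3) - β * (2 * v + u ^ 2) - δ * u)
    (hR4 : R4 = v ^ 2 + 2 * u * z + 2 * v * z * x + z ^ 2 * x ^ 2)
    (hc4 : c4 = u * (2 * z + 2 * u * v) + v * (2 * v + u ^ 2) + 2 * u * z)
    (hc5 : c5 = v * (2 * z + 2 * u * v) + z * (2 * v + u ^ 2))
    (hc6 : c6 = z * (2 * z + 2 * u * v)) :
    rel t β δ ε x Y = x ^ 4 * (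
      W * ((x + x ^ 3 - t - t * x ^ 4) + t * (Y ^ 2 + Y * p + p ^ 2) - β * x * (Y + p) - δ * x ^ 2)
      + ((-t + u + z) + (-t * u + v) * x + (z - t * v) * x ^ 2 - t * z * x ^ 3)
      + t * (c4 + c5 * x + c6 * x ^ 2 + p * R4)
      - β * ((2 * z + 2 * u * v) + x * R4) - δ * (v + z * x)) := by
  subst hY hε hβ hδ hR4 hc4 hc5 hc6 hp
  unfold rel
  ring

theorem rel_y {A : Type*} [CommRing A] (t b w M m m1 m2 m3 β δ ε u v V : A)
    (hb : b = w - 1)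
    (hm1 : m1 = 1 + t * u) (hm2 : m2 = - (t ^ 2 * (1 + v))) (hm3 : m3 = - (t ^ 2 * V))
    (hm : m = -1 + m1 * w + m2 * w ^ 2)
    (hM : M = m + w ^ 3 * m3)
    (hβ : β = 1 + 2 * t * u) (hδ : δ = 2 * t * v - u - t * u ^ 2) :
    ∃ g, M * (t ^ 2 * b * w ^ 2 + b) + t ^ 2 * w ^ 2 + M ^ 3 - β * M ^ 2 * w - t * δ * M * w ^ 2
      - t ^ 2 * ε * w ^ 3 = w ^ 3 * g := by
  refine ⟨
      (m2 - t ^ 2 * m1 - t ^ 2 + (t ^ 2 * m1 - t ^ 2 * m2) * w + t ^ 2 * m2 * w ^ 2)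
      + (w - 1) * (1 + t ^ 2 * w ^ 2) * m3
      + (m1 ^ 3 - 6 * m1 * m2 + (3 * m1 ^ 2 * m2 - 3 * m2 ^ 2) * w + 3 * m1 * m2 ^ 2 * w ^ 2
        + m2 ^ 3 * w ^ 3)
      + m3 * (M ^ 2 + M * m + m ^ 2)
      - β * ((m1 ^ 2 - 2 * m2) + 2 * m1 * m2 * w + m2 ^ 2 * w ^ 2 + w * m3 * (M + m))
      - t * δ * (m1 + m2 * w + w ^ 2 * m3) - t ^ 2 * ε, ?_⟩
  subst hM hm hβ hδ hm1 hm2 hm3 hb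
  ring

/-- On the kernel curve, the two relations agree. -/
theorem rel_kernel {A : Type*} [CommRing A] [IsDomain A] (t a b Qa Qb Q0 Y M β δ ε : A)
    (hk : a * b = t * (1 + b) * (1 + a ^ 2 * b))
    (hf : a * b - t * Qa - t * (1 + b) * Qb + t * Q0 = 0)
    (hY : Y = 1 + t * a * Qa)
    (hM : M = b - t ^ 2 * (1 + b) ^ 2 * Qb + t ^ 2 * (1 + b) * Q0) :
    t ^ 2 * rel t β δ ε a Y * b * (1 + b) ^ 3 =
      a ^ 3 * (M * (t ^ 2 * b ^ 2 * (1 + b) ^ 2 + t ^ 2 * (1 + b) ^ 2 + b ^ 2)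
        + b * (M ^ 3 - β * M ^ 2 * (1 + b) - t * δ * M * (1 + b) ^ 2 - t ^ 2 * ε * (1 + b) ^ 3)) := by
  have h1 : t * (1 + b) * Y = a * M := by
    rw [hY, hM]; linear_combination -hk - t * (1 + b) * a * hf
  have h2 : t * (1 + b) ^ 2 * (a + a ^ 3 - t - t * a ^ 4) * b
      = a ^ 2 * (t ^ 2 * b ^ 2 * (1 + b) ^ 2 + t ^ 2 * (1 + b) ^ 2 + b ^ 2) := by
    linear_combination (t * (1 + b) ^ 2 * (1 + a ^ 2) - a * b - t * (1 + b) * (1 + a ^ 2 * b)) * hk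
  have h3 : t ^ 3 * (1 + b) ^ 3 * Y ^ 3 = a ^ 3 * M ^ 3 := by
    rw [← mul_pow, ← mul_pow, h1, mul_pow]
  have h4 : t ^ 2 * (1 + b) ^ 2 * Y ^ 2 = a ^ 2 * M ^ 2 := by
    rw [← mul_pow, ← mul_pow, h1, mul_pow]
  unfold rel
  linear_combination (t * (1 + b) ^ 2 * (a + a ^ 3 - t - t * a ^ 4) * b) * h1 + a * M * h2 + b * h3
    - β * a * b * (1 + b) * h4 - δ * t * a ^ 2 * (1 + b) ^ 2 * b * h1

noncomputable def Y : PX := 1 + X * xx * Qx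
noncomputable def be : PS := 1 + 2 * X ^ 2 * Q0
noncomputable def de : PS := 2 * X ^ 2 * q1 - X * Q0 - X ^ 3 * Q0 ^ 2

theorem io_X : io X = (X : PX) := map_X _

theorem main_rel : ∃ ep : PS, rel X (io be) (io de) (io ep) xx Y = 0 := by
  obtain ⟨q2, W, hW⟩ := Qx_split
  obtain ⟨U, hU⟩ := Qy_split0
  obtain ⟨V, hV⟩ := Qy_split1
  let u : PS := X * Q0
  let v : PS := X * q1
  let z : PS := X * q2
  let ep : PS := (-X * z + v + 1) + X * (3 * z + 6 * u * v + u ^ 3) - be * (2 * v + u ^ 2) - de * u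
  refine ⟨ep, ?_⟩
  obtain ⟨f, hx⟩ : ∃ f, rel X (io be) (io de) (io ep) xx Y = xx ^ 4 * f := ⟨_, rel_x X xx (io u) (io v) (io z) (X * W) _ Y (io be) (io de) (io ep) _ _ _ _ rfl
    (by rw [Y, hW]; simp only [u, v, z, map_mul, io_X]; ring)
    (by simp only [be, u, map_mul, map_add, map_one, map_pow, map_ofNat, io_X]; ring)
    (by simp only [de, u, v, map_mul, map_sub, map_add, map_one, map_pow, map_ofNat, io_X]; ring)
    (by simp only [ep, map_mul, map_sub, map_add, map_neg, map_one, map_pow, map_ofNat, io_X])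
    rfl rfl rfl rfl⟩
  obtain ⟨M, hMd⟩ : ∃ M : PX, M = xx - X ^ 2 * (1 + xx) ^ 2 * Qy + X ^ 2 * (1 + xx) * io Q0 := ⟨_, rfl⟩
  obtain ⟨g, hy⟩ := rel_y X xx (1 + xx) M _ _ _ _ (io be) (io de) (io ep) (io u) (io v) V
    (by ring) rfl rfl rfl rfl
    (by simp only [hMd, hV, u, v, map_mul, io_X]; ring)
    (by simp only [be, u, map_mul, map_add, map_one, map_pow, map_ofNat, io_X]; ring)
    (by simp only [de, u, v, map_mul, map_sub, map_add, map_one, map_pow, map_ofNat, io_X]; ring)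
  have hMU : M = xx * (1 - X ^ 2 * (1 + xx) * (Qy + U)) := by
    rw [hMd]; linear_combination (- X ^ 2 * (1 + xx)) * hU
  have pt : ∀ a b : PS, a ≠ 0 → b ≠ 0 → 1 + b ≠ 0 → a * b = X * (1 + b) * (1 + a ^ 2 * b) →
      a * ev a (X ^ 2 * f) = ev b (g - X ^ 4 * (Qy + U)) := by
    intro a b ha hb hb1 hk
    obtain ⟨c, hc⟩ := func_eq_ev a b
    have hf : a * b - X * ev a Qx - X * (1 + b) * ev b Qy + X * Q0 = 0 := by
      rw [← hc, hk]; ring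
    have hr := rel_kernel X a b (ev a Qx) (ev b Qy) Q0 (ev a Y) (ev b M) be de ep hk hf
      (by simp only [Y, map_add, map_mul, map_one, ev_X, ev_x])
      (by simp only [hMd, map_add, map_sub, map_mul, map_one, map_pow, ev_X, ev_x, ev_const])
    have hx' := congrArg (ev a) hx
    have hy' := congrArg (ev b) hy
    have hMU' := congrArg (ev b) hMU
    simp only [rel, map_add, map_sub, map_mul, map_one, map_pow, ev_X, ev_x, ev_const]
      at hx' hy' hMU' ⊢
    rw [rel] at hr
    have hne : a ^ 3 * b * (1 + b) ^ 3 ≠ 0 :=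
      mul_ne_zero (mul_ne_zero (pow_ne_zero _ ha) hb) (pow_ne_zero _ hb1)
    apply mul_left_cancel₀ hne
    linear_combination hr - X ^ 2 * b * (1 + b) ^ 3 * hx' + a ^ 3 * b * hy'
      + a ^ 3 * X ^ 2 * (1 + b) ^ 2 * hMU'
  have hfz : X ^ 2 * f = 0 := by
    apply invariant_lemma _ (g - X ^ 4 * (Qy + U))
    · intro y hy0 hy1
      obtain ⟨a, ha⟩ := exists_fix ((1 + y) / y) 0 (1 + y)
      have hXa : X ∣ a := ⟨_, ha⟩
      have hyC : (C y : PS) ≠ 0 := by simpa using hy0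
      have hC1 : (C ((1 + y) / y) : PS) * C y = 1 + C y := by
        rw [← map_mul, div_mul_cancel₀ _ hy0, map_add, map_one]
      have hy1' : (1 + C y : PS) ≠ 0 := by
        intro h
        have h' := congrArg constantCoeff h
        simp at h'
        apply hy1; linarith
      have hk : a * C y = X * (1 + C y) * (1 + a ^ 2 * C y) := by
        have e : (C (1 + y) : PS) = 1 + C y := by rw [map_add, map_one]
        rw [e, map_zero] at ha
        linear_combination C y * ha + X * hC1
      refine ⟨a, hXa, pt a (C y) ?_ hyC hy1' hk⟩
      rintro rfl
      apply mul_ne_zero (X_ne_zero (R := ℚ)) hy1'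
      linear_combination -hk
    · intro x hx0
      obtain ⟨b, hb⟩ := exists_fix x⁻¹ (x⁻¹ * (1 + x ^ 2)) x
      have hxC : (C x : PS) ≠ 0 := by simpa using hx0
      have hC1 : (C x⁻¹ : PS) * C x = 1 := by
        rw [← map_mul, inv_mul_cancel₀ hx0, map_one]
      have hk : C x * b = X * (1 + b) * (1 + C x ^ 2 * b) := by
        rw [map_mul, map_add, map_one, map_pow] at hb
        linear_combination C x * hb + X * (1 + (1 + C x ^ 2) * b) * hC1
      refine ⟨b, pt (C x) b hxC ?_ ?_ hk⟩
      · rintro rfl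
        apply X_ne_zero (R := ℚ)
        linear_combination -hk
      · intro h
        have h2 := congrArg constantCoeff hb
        have h3 := congrArg constantCoeff h
        simp only [map_mul, constantCoeff_X, zero_mul] at h2
        simp [h2] at h3
  have : f = 0 := by
    have h2 : (X ^ 2 : PX) ≠ 0 := pow_ne_zero _ X_ne_zero
    exact (mul_eq_zero.1 hfz).resolve_left h2
  rw [hx, this, mul_zero]

/-- derivative in x -/
noncomputable def D (f : PX) : PX := PowerSeries.mk fun n => Polynomial.derivative (coeff n f)

theorem D_add (f g : PX) : D (f + g) = D f + D g := by
  ext1 n; simp [D]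
theorem D_sub (f g : PX) : D (f - g) = D f - D g := by
  ext1 n; simp [D]
theorem D_mul (f g : PX) : D (f * g) = D f * g + f * D g := by
  ext1 n
  rw [D, coeff_mk, coeff_mul, map_add, coeff_mul, coeff_mul, Polynomial.derivative_sum,
    ← Finset.sum_add_distrib]
  simp [D, Polynomial.derivative_mul]
theorem D_io (c : PS) : D (io c) = 0 := by
  ext1 n; simp [D]
theorem D_X : D (X : PX) = 0 := by rw [← io_X, D_io]
theorem D_one : D (1 : PX) = 0 := by rw [← map_one io, D_io]
theorem D_xx : D xx = 1 := by
  ext1 n; simp [D, coeff_C, coeff_one, apply_ite Polynomial.derivative]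

theorem crit (ep : PS) (h : rel X (io be) (io de) (io ep) xx Y = 0) (a : PS)
    (ha : (a ^ 2 - 1) * (a - 2 * X * (a ^ 2 + 1)) = 0) :
    (a + a ^ 3 - X - X * a ^ 4) + 3 * X * ev a Y ^ 2 - 2 * be * a * ev a Y - de * a ^ 2 = 0
    ∧ -2 * X * ev a Y ^ 3 + be * a * ev a Y ^ 2 - ep * a ^ 3 = 0 := by
  have hY : ev a Y = 1 + X * a * ev a Qx := by
    simp only [Y, map_add, map_mul, map_one, ev_X, ev_x]
  have hDY : ev a (D Y) = X * ev a (Qx + xx * D Qx) := by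
    simp only [Y, D_add, D_mul, D_one, D_X, D_xx, map_add, map_mul, map_zero, map_one, ev_X, ev_x]
    ring
  have h1 := congrArg (ev a) h
  have h2 := congrArg (ev a) (congrArg D h)
  have hD0 : D 0 = 0 := by
    have := D_io 0
    rwa [map_zero] at this
  rw [hD0] at h2
  simp only [rel, pow_succ, pow_zero, one_mul, D_add, D_sub, D_mul, D_io, D_X, D_xx, map_add, map_sub, map_mul,
    map_zero, map_one, ev_X, ev_x, ev_const] at h1 h2
  have h3 : ((a + a ^ 3 - X - X * a ^ 4) + 3 * X * ev a Y ^ 2 - 2 * be * a * ev a Y - de * a ^ 2)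
      * (a * ev a (D Y) - ev a Y) = 0 := by
    linear_combination a * h2 - 3 * h1 - ev a Y * ha
  have hne : a * ev a (D Y) - ev a Y ≠ 0 := by
    intro h0
    have := congrArg constantCoeff h0
    rw [hDY, hY] at this
    simp at this
  have h4 := (mul_eq_zero.1 h3).resolve_right hne
  exact ⟨h4, by linear_combination h1 - ev a Y * h4⟩
end
end Gessel


namespace Gessel
section
open PowerSeries

theorem ne_zero_of_cc {f : PS} (h : constantCoeff f ≠ 0) : f ≠ 0 := by
  rintro rfl; simp at h

theorem cc_ofNat (n : ℕ) [n.AtLeastTwo] :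
    constantCoeff (ofNat(n) : PS) = OfNat.ofNat n := map_ofNat _ n

instance : CharZero PS := charZero_of_injective_algebraMap (algebraMap ℚ PS).injective

/-- elimination -/
theorem alg1 (β δ ε A Y1 Y2 B : PS)
    (c1 : -Y1 ^ 3 + β * Y1 ^ 2 - 4 * X ^ 2 * ε = 0)
    (c2 : -Y2 ^ 3 + β * Y2 ^ 2 - 4 * X ^ 2 * ε = 0)
    (c3 : -B ^ 3 + β * B ^ 2 - 4 * X ^ 2 * ε = 0)
    (g1 : 8 * X - 8 * X ^ 2 + 3 * Y1 ^ 2 - 4 * β * Y1 - 4 * X * δ = 0)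
    (g2 : -8 * X - 8 * X ^ 2 + 3 * Y2 ^ 2 - 4 * β * Y2 - 4 * X * δ = 0)
    (g3 : 1 + 8 * X ^ 2 + 3 * B ^ 2 - 4 * β * B - 4 * X * δ = 0)
    (n1 : Y1 - Y2 ≠ 0) (n2 : B - Y1 ≠ 0) (n3 : B - Y2 ≠ 0)
    (hA : Y1 + Y2 = 4 * X ^ 2 * A) :
    β = 4 * X ^ 2 * A + B ∧ A * (B + X ^ 2 * A) ^ 3 = 1 ∧
    B ^ 2 + 20 * X ^ 2 * A * B - 8 * X ^ 4 * A ^ 2 = 1 + 16 * X ^ 2 := by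
  have e1 : β * (Y1 + Y2) - (Y1 ^ 2 + Y1 * Y2 + Y2 ^ 2) = 0 := by
    apply (mul_eq_zero.1 (?_ : (Y1 - Y2) * _ = 0)).resolve_left n1
    linear_combination c1 - c2
  have e2 : β * (Y1 + B) - (Y1 ^ 2 + Y1 * B + B ^ 2) = 0 := by
    apply (mul_eq_zero.1 (?_ : (B - Y1) * _ = 0)).resolve_left n2
    linear_combination c3 - c1
  have e3 : β - (Y1 + Y2 + B) = 0 := by
    apply (mul_eq_zero.1 (?_ : (B - Y2) * _ = 0)).resolve_left n3
    linear_combination e2 - e1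
  have hb : β = 4 * X ^ 2 * A + B := by linear_combination e3 + hA
  have e4 : Y1 * Y2 = - (4 * X ^ 2 * A * B) := by
    linear_combination e1 - (Y1 + Y2) * e3 - B * hA
  have e5 : (Y1 - Y2) * (B + X ^ 2 * A) = 4 * X := by
    have h4 : (4 : PS) ≠ 0 := by norm_num
    apply mul_left_cancel₀ h4
    linear_combination g2 - g1 - 4 * (Y1 - Y2) * hb + 3 * (Y1 - Y2) * hA
  have hx : (16 * X ^ 2 : PS) ≠ 0 := mul_ne_zero (by norm_num) (pow_ne_zero _ X_ne_zero)
  refine ⟨hb, ?_, ?_⟩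
  · apply mul_left_cancel₀ hx
    have e6 : (Y1 - Y2) ^ 2 = 16 * X ^ 2 * A * (B + X ^ 2 * A) := by
      linear_combination (Y1 + Y2 + 4 * X ^ 2 * A) * hA - 4 * e4
    linear_combination -(B + X ^ 2 * A) ^ 2 * e6
      + ((Y1 - Y2) * (B + X ^ 2 * A) + 4 * X) * e5
  · have h2 : (2 : PS) ≠ 0 := by norm_num
    apply mul_left_cancel₀ h2
    subst hb
    linear_combination g1 + g2 - 2 * g3 - (3 * (Y1 + Y2 + 4 * X ^ 2 * A) - 4 * (4 * X ^ 2 * A + B)) * hA + 6 * e4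

theorem alg2 : ∃ A Cc : PS, constantCoeff Cc = 1 ∧ A * Cc ^ 3 = 1 ∧
    Cc ^ 8 + 18 * X ^ 2 * Cc ^ 4 - 27 * X ^ 4 = (1 + 16 * X ^ 2) * Cc ^ 6 ∧
    2 * X ^ 2 * Q0 = 3 * X ^ 2 * A + Cc - 1 := by
  obtain ⟨ep, hep⟩ := main_rel
  have hY : ∀ a, ev a Y = 1 + X * a * ev a Qx := by
    intro a
    simp only [Y, map_add, map_mul, map_one, ev_X, ev_x]
  obtain ⟨x, hx⟩ := exists_fix 2 0 2
  have hx1 : x = 2 * X * (1 + x ^ 2) := by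
    have : (C 2 : PS) = 2 := map_ofNat _ 2
    simp only [this, map_zero] at hx
    linear_combination hx
  have hx0 : x ≠ 0 := by
    rintro rfl
    have : (2 : PS) * X = 0 := by linear_combination -hx1
    exact mul_ne_zero (by norm_num) X_ne_zero this
  have hx2 : x ^ 2 ≠ 0 := pow_ne_zero _ hx0
  have hx3 : x ^ 3 ≠ 0 := pow_ne_zero _ hx0
  obtain ⟨a1, a2⟩ := crit ep hep 1 (by ring)
  obtain ⟨b1, b2⟩ := crit ep hep (-1) (by ring)
  obtain ⟨d1, d2⟩ := crit ep hep x (by linear_combination (x ^ 2 - 1) * hx1)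
  have hh : (C (1/2) : PS) * 2 = 1 := by
    have : (C 2 : PS) = 2 := map_ofNat _ 2
    rw [← this, ← map_mul]; norm_num
  have hY1 := hY 1
  have hY2 := hY (-1)
  have hY3 := hY x
  set y1 := ev 1 Y
  set y2 := ev (-1) Y
  set y3 := ev x Y
  have hBx : y3 * (1 - 2 * X * x) * x = 2 * X * y3 := by linear_combination y3 * hx1
  have ccy1 : constantCoeff y1 = 1 := by rw [hY1]; simp
  have ccy2 : constantCoeff y2 = 1 := by rw [hY2]; simp
  have ccy3 : constantCoeff y3 = 1 := by rw [hY3]; simp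
  have ccB : constantCoeff (y3 * (1 - 2 * X * x)) = 1 := by simp [ccy3]
  set B := y3 * (1 - 2 * X * x)
  set A : PS := C (1/2) * (ev 1 Qx + ev (-1) Qx)
  obtain ⟨r1, r2, r3⟩ := alg1 be de ep A (2 * X * y1) (-(2 * X * y2)) B
    (by linear_combination 4 * X ^ 2 * a2) (by linear_combination -4 * X ^ 2 * b2)
    (by
      apply (mul_eq_zero.1 (?_ : x ^ 3 * _ = 0)).resolve_left hx3
      linear_combination 4 * X ^ 2 * d2
        - ((B * x) ^ 2 + B * x * (2 * X * y3) + (2 * X * y3) ^ 2 - be * x * (B * x + 2 * X * y3)) * hBx)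
    (by linear_combination 4 * X * a1) (by linear_combination 4 * X * b1)
    (by
      apply (mul_eq_zero.1 (?_ : x ^ 2 * _ = 0)).resolve_left hx2
      linear_combination 4 * X * d1 + (3 * (B * x + 2 * X * y3) - 4 * be * x) * hBx
        + (2 * x - 2 * X * (1 + x ^ 2) - x) * hx1)
    (by
      have : 2 * X * y1 - -(2 * X * y2) = X * (2 * (y1 + y2)) := by ring
      rw [this]
      refine mul_ne_zero X_ne_zero (ne_zero_of_cc ?_)
      rw [map_mul, map_add, ccy1, ccy2, cc_ofNat]; norm_num)
    (by
      apply ne_zero_of_cc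
      simp [ccB])
    (by
      apply ne_zero_of_cc
      simp [ccB])
    (by
      rw [hY1, hY2]
      linear_combination -2 * X ^ 2 * (ev 1 Qx + ev (-1) Qx) * hh)
  refine ⟨A, B + X ^ 2 * A, by simp [ccB], r2, ?_, ?_⟩
  · have e : (B + X ^ 2 * A) ^ 2 + 18 * X ^ 2 * A * (B + X ^ 2 * A) - 27 * X ^ 4 * A ^ 2 = 1 + 16 * X ^ 2 := by
      linear_combination r3
    set Cc := B + X ^ 2 * A
    linear_combination Cc ^ 6 * e - (18 * X ^ 2 * Cc ^ 4 - 27 * X ^ 4 * (A * Cc ^ 3 + 1)) * r2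
  · have : be = 1 + 2 * X ^ 2 * Q0 := rfl
    linear_combination r1 - this

theorem alg3 : ∃ k : PS, constantCoeff k = 1 ∧
    256 * k ^ 6 * X ^ 2 = (k ^ 2 + 3) ^ 3 * (k ^ 2 - 1) ∧
    Q0 * ((k + 1) * (k ^ 2 + 3) ^ 3) = 32 * k ^ 3 * (k ^ 3 - 3 * k ^ 2 + 3 * k + 3) := by
  obtain ⟨A, c, hc, h1, h2, h3⟩ := alg2
  have hu : constantCoeff (4 * c ^ 2 - 3) = 1 := by
    rw [map_sub, map_mul, map_pow, hc, cc_ofNat, cc_ofNat]; norm_num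
  have hu0 := ne_zero_of_cc (f := 4 * c ^ 2 - 3) (by rw [hu]; exact one_ne_zero)
  obtain ⟨v, hv⟩ : ∃ v, (4 * c ^ 2 - 3) * v = 1 :=
    ⟨_, PowerSeries.mul_inv_cancel (4 * c ^ 2 - 3) (by rw [hu]; exact one_ne_zero)⟩
  have hN : (27 * X ^ 2 + 8 * c ^ 6 - 9 * c ^ 4) ^ 2 = c ^ 6 * (4 * c ^ 2 - 3) ^ 3 := by
    linear_combination -27 * h2
  obtain ⟨w, hw⟩ : ∃ w, w = A * (27 * X ^ 2 + 8 * c ^ 6 - 9 * c ^ 4) * v := ⟨_, rfl⟩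
  have hw1 : w * (4 * c ^ 2 - 3) = A * (27 * X ^ 2 + 8 * c ^ 6 - 9 * c ^ 4) := by
    rw [hw]; linear_combination A * (27 * X ^ 2 + 8 * c ^ 6 - 9 * c ^ 4) * hv
  have hw2 : w ^ 2 = 4 * c ^ 2 - 3 := by
    apply mul_left_cancel₀ (pow_ne_zero 2 hu0)
    linear_combination (w * (4 * c ^ 2 - 3) + A * (27 * X ^ 2 + 8 * c ^ 6 - 9 * c ^ 4)) * hw1
      + A ^ 2 * hN + (A * c ^ 3 + 1) * (4 * c ^ 2 - 3) ^ 3 * h1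
  have hs : 27 * X ^ 2 = w ^ 3 * c ^ 3 - 8 * c ^ 6 + 9 * c ^ 4 := by
    linear_combination -c ^ 3 * w * hw2 - c ^ 3 * hw1
      - (27 * X ^ 2 + 8 * c ^ 6 - 9 * c ^ 4) * h1
  have hwc : constantCoeff w = -1 := by
    have hAc := congrArg constantCoeff h1
    have hvc := congrArg constantCoeff hv
    rw [map_mul, hu] at hvc
    simp [hc] at hAc hvc
    rw [hw]
    simp [hc, hAc, hvc, cc_ofNat]
    norm_num
  have hk : constantCoeff (2 * c + w) = 1 := by
    simp [hc, hwc, cc_ofNat]; norm_num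
  obtain ⟨k, hkd⟩ : ∃ k, k = 2 * c + w := ⟨_, rfl⟩
  rw [← hkd] at hk
  have hk0 : k ≠ 0 := ne_zero_of_cc (by rw [hk]; exact one_ne_zero)
  have k1 : 4 * (k * c) = k ^ 2 + 3 := by
    rw [hkd]; linear_combination -hw2
  have k2 : 2 * (k * w) = k ^ 2 - 3 := by
    rw [hkd]; linear_combination hw2
  have h256 : 256 * k ^ 6 * X ^ 2 = (k ^ 2 + 3) ^ 3 * (k ^ 2 - 1) := by
    have hz : (27 * 16 : PS) ≠ 0 := by norm_num
    apply mul_left_cancel₀ hz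
    have : (27 * 16 : PS) * (256 * k ^ 6 * X ^ 2)
        = 8 * ((2 * (k * w)) ^ 3 * (4 * (k * c)) ^ 3) - 8 * (4 * (k * c)) ^ 6
          + 144 * k ^ 2 * (4 * (k * c)) ^ 4 := by
      linear_combination 4096 * k ^ 6 * hs
    rw [this, k1, k2]
    ring
  refine ⟨k, hk, h256, ?_⟩
  have k3 : A * (k ^ 2 + 3) ^ 3 = 64 * k ^ 3 := by
    rw [← k1]; linear_combination 64 * k ^ 3 * h1
  have hz : (2 * X ^ 2 * (4 * k) : PS) ≠ 0 :=
    mul_ne_zero (mul_ne_zero (by norm_num) (pow_ne_zero _ X_ne_zero)) (mul_ne_zero (by norm_num) hk0)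
  apply mul_left_cancel₀ hz
  linear_combination (4 * k) * (k + 1) * (k ^ 2 + 3) ^ 3 * h3
    + 3 * X ^ 2 * 4 * k * (k + 1) * k3 + (k + 1) * (k ^ 2 + 3) ^ 3 * k1 - (k - 3) * h256

/-- Euler operator -/
noncomputable def th (f : PS) : PS := PowerSeries.mk fun n => (n : ℚ) * coeff n f

theorem th_add (f g : PS) : th (f + g) = th f + th g := by
  ext n; simp [th]; ring
theorem th_sub (f g : PS) : th (f - g) = th f - th g := by
  ext n; simp [th]; ring
theorem th_mul (f g : PS) : th (f * g) = th f * g + f * th g := by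
  ext n
  rw [th, coeff_mk, coeff_mul, map_add, coeff_mul, coeff_mul, ← Finset.sum_add_distrib,
    Finset.mul_sum]
  apply Finset.sum_congr rfl
  intro p hp
  have : (n : ℚ) = p.1 + p.2 := by
    have hp := Finset.HasAntidiagonal.mem_antidiagonal.1 hp
    exact_mod_cast hp.symm
  simp only [th, coeff_mk, this]
  ring
theorem th_C (c : ℚ) : th (C c) = 0 := by
  ext n; simp [th, coeff_C]
  intro h
  exact Or.inl h
theorem th_ofNat (n : ℕ) [n.AtLeastTwo] : th (ofNat(n) : PS) = 0 := by
  change th (OfNat.ofNat n : PS) = 0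
  rw [← map_ofNat (C (R := ℚ)) n, th_C]
theorem th_one : th (1 : PS) = 0 := by
  rw [← map_one (C (R := ℚ)), th_C]
theorem th_X : th (X : PS) = X := by
  ext n
  simp only [th, coeff_mk, coeff_X]
  split_ifs with h <;> simp [h]

/-- quotient rule -/
theorem quot (k f d n d' n' K E n1 : PS) (hd : d ≠ 0)
    (hk : th k * E = K) (h : f * d = n) (hd' : th d = d' * th k) (hn' : th n = n' * th k)
    (h1 : K * (n' * d - n * d') = n1 * d) : th f * d * E = n1 := by
  have h2 := congrArg th h
  rw [th_mul, hd', hn'] at h2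
  apply mul_right_cancel₀ hd
  linear_combination E * d * h2 + (n' * d - d' * f * d) * hk - K * d' * h + h1

theorem ode : 3 * th (th Q0) + 10 * th Q0 + 8 * Q0
    - 16 * X ^ 2 * (3 * th (th Q0) + 8 * th Q0 + 5 * Q0) = 8 := by
  obtain ⟨k, hk, hs, hq⟩ := alg3
  have hk0 : k ≠ 0 := ne_zero_of_cc (by rw [hk]; exact one_ne_zero)
  have hk1 : k + 1 ≠ 0 := ne_zero_of_cc (by simp [hk])
  have hk3 : k ^ 2 + 3 ≠ 0 := ne_zero_of_cc (by simp [hk, cc_ofNat]; norm_num)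
  have hkm : k ^ 2 - 3 ≠ 0 := ne_zero_of_cc (by simp [hk, cc_ofNat]; norm_num)
  have hd : (k + 1) * (k ^ 2 + 3) ^ 3 ≠ 0 := mul_ne_zero hk1 (pow_ne_zero _ hk3)
  have hE : (k ^ 2 - 3) ^ 2 ≠ 0 := pow_ne_zero _ hkm
  have hkk : th k * (k ^ 2 - 3) ^ 2 = k * (k ^ 2 + 3) * (k ^ 2 - 1) := by
    have h2 := congrArg th hs
    simp only [pow_succ, pow_zero, one_mul, th_mul, th_add, th_sub, th_ofNat, th_one, th_X] at h2
    have hz : 2 * (k ^ 2 + 3) ^ 2 ≠ 0 := mul_ne_zero (by norm_num) (pow_ne_zero _ hk3)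
    apply mul_left_cancel₀ hz
    linear_combination (6 * th k + 2 * k) * hs - k * h2
  have hdd : th ((k + 1) * (k ^ 2 + 3) ^ 3)
      = ((k ^ 2 + 3) ^ 3 + (k + 1) * (6 * k * (k ^ 2 + 3) ^ 2)) * th k := by
    simp only [pow_succ, pow_zero, one_mul, th_mul, th_add, th_sub, th_ofNat, th_one, th_X]
    ring
  have q1 := quot k Q0 _ _ _ (32 * (6 * k ^ 5 - 15 * k ^ 4 + 12 * k ^ 3 + 9 * k ^ 2)) _ _
    (k ^ 3 * (k - 1) * (96 + 192 * k - 32 * k ^ 2) * (k ^ 2 - 3) ^ 2)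
    hd hkk hq hdd (by
      simp only [pow_succ, pow_zero, one_mul, th_mul, th_add, th_sub, th_ofNat, th_one, th_X]
      ring) (by ring)
  have q1' := mul_right_cancel₀ hE q1
  have q2 := quot k (th Q0) _ _ _ (-384 * k ^ 3 - 96 * 3 * k ^ 2 + 5 * 224 * k ^ 4 - 6 * 32 * k ^ 5) _ _
    (k ^ 3 * (k - 1) * (-864 - 1728 * k + 2784 * k ^ 2 + 2688 * k ^ 3 - 416 * k ^ 4 - 448 * k ^ 5 + 32 * k ^ 6))
    hd hkk q1' hdd (by
      simp only [pow_succ, pow_zero, one_mul, th_mul, th_add, th_sub, th_ofNat, th_one, th_X]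
      ring) (by ring)
  have hz : 256 * k ^ 6 * ((k + 1) * (k ^ 2 + 3) ^ 3 * (k ^ 2 - 3) ^ 2) ≠ 0 :=
    mul_ne_zero (mul_ne_zero (by norm_num) (pow_ne_zero _ hk0)) (mul_ne_zero hd hE)
  apply mul_left_cancel₀ hz
  have t0 : Q0 * ((k + 1) * (k ^ 2 + 3) ^ 3) * (k ^ 2 - 3) ^ 2 = _ :=
    congrArg (· * (k ^ 2 - 3) ^ 2) hq
  obtain ⟨S, hS⟩ : ∃ S : PS, S = X ^ 2 := ⟨_, rfl⟩
  rw [← hS] at hs ⊢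
  linear_combination (256 * k ^ 6) * (3 * q2 + 10 * q1 + 8 * t0 - 16 * S * (3 * q2 + 8 * q1 + 5 * t0))
    - 16 * (3 * (k ^ 3 * (k - 1) * (-864 - 1728 * k + 2784 * k ^ 2 + 2688 * k ^ 3 - 416 * k ^ 4 - 448 * k ^ 5 + 32 * k ^ 6))
      + 8 * (k ^ 3 * (k - 1) * (96 + 192 * k - 32 * k ^ 2) * (k ^ 2 - 3) ^ 2)
      + 5 * (32 * k ^ 3 * (k ^ 3 - 3 * k ^ 2 + 3 * k + 3) * (k ^ 2 - 3) ^ 2)) * hs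

theorem rec0 : q 0 0 0 = 1 := by
  have h := congrArg (coeff 0) ode
  simp [th, Q0, cc_ofNat] at h
  linarith

theorem eight : (8 : PS) = C 8 := (map_ofNat _ 8).symm

theorem ode' (n : ℕ) : ((n : ℚ) + 2) * (3 * n + 4) * coeff n Q0
    = coeff n (8 + X ^ 2 * (C 16 * (C 3 * th (th Q0) + C 8 * th Q0 + C 5 * Q0))) := by
  have h : C 3 * th (th Q0) + C 10 * th Q0 + C 8 * Q0 =
      8 + X ^ 2 * (C 16 * (C 3 * th (th Q0) + C 8 * th Q0 + C 5 * Q0)) := by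
    have := ode
    simp only [map_ofNat]
    linear_combination this
  rw [← h]
  simp only [map_add, coeff_C_mul, th, coeff_mk]
  ring

theorem rec1 : q 1 0 0 = 0 := by
  have h := ode' 1
  rw [map_add, coeff_X_pow_mul', eight, coeff_C] at h
  simp [Q0] at h
  norm_num at h
  exact h

theorem rec2 (n : ℕ) : q (n + 2) 0 0 * ((n + 4) * (3 * n + 10)) = 16 * (3 * n + 5) * (n + 1) * q n 0 0 := by
  have h := ode' (n + 2)
  rw [map_add, coeff_X_pow_mul, eight, coeff_C] at h
  simp only [map_add, coeff_C_mul, th, coeff_mk, Q0] at h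
  rw [if_neg (by omega)] at h
  push_cast at h
  linear_combination h

theorem odd_zero (n : ℕ) : q (2 * n + 1) 0 0 = 0 := by
  induction n with
  | zero => exact rec1
  | succ n ih =>
    have h := rec2 (2 * n + 1)
    rw [ih, mul_zero] at h
    refine (mul_eq_zero.1 h).resolve_right ?_
    push_cast
    positivity

theorem even_val (n : ℕ) : q (2 * n) 0 0 =
    16 ^ n * (ascPochhammer ℚ n).eval (5/6) * (ascPochhammer ℚ n).eval (1/2) /
          ((ascPochhammer ℚ n).eval 2 * (ascPochhammer ℚ n).eval (5/3)) := by
  induction n with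
  | zero => simp [rec0]
  | succ n ih =>
    have h := rec2 (2 * n)
    rw [ih] at h
    have p1 : (ascPochhammer ℚ n).eval 2 ≠ 0 := (ascPochhammer_pos n _ (by norm_num)).ne'
    have p2 : (ascPochhammer ℚ n).eval (5/3) ≠ 0 := (ascPochhammer_pos n _ (by norm_num)).ne'
    have p3 : (((2 * n : ℕ) : ℚ) + 4) * (3 * ((2 * n : ℕ) : ℚ) + 10) ≠ 0 := by push_cast; positivity
    have p4 : (2 + n : ℚ) ≠ 0 := by positivity
    have p5 : (5 / 3 + n : ℚ) ≠ 0 := by positivity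
    rw [show 2 * (n + 1) = 2 * n + 2 by ring, eq_div_of_mul_eq p3 h]
    simp only [ascPochhammer_succ_eval]
    rw [div_eq_div_iff p3 (mul_ne_zero (mul_ne_zero p1 p4) (mul_ne_zero p2 p5))]
    field_simp
    push_cast
    ring

end
end Gessel

theorem gessel_conjecture :
    (∀ n : ℕ, (qpWalks {(-1,0), (1,0), (-1,-1), (1,1)} (2 * n) (0, 0) : ℚ) =
        16 ^ n * (ascPochhammer ℚ n).eval (5/6) * (ascPochhammer ℚ n).eval (1/2) /
          ((ascPochhammer ℚ n).eval 2 * (ascPochhammer ℚ n).eval (5/3))) ∧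
    (∀ m : ℕ, Odd m → qpWalks {(-1,0), (1,0), (-1,-1), (1,1)} m (0, 0) = 0) := by
  have hq : ∀ m, (qpWalks {(-1,0), (1,0), (-1,-1), (1,1)} m (0, 0) : ℚ) = Gessel.q m 0 0 := by
    intro m
    simp [Gessel.q, Gessel.GS]
  refine ⟨fun n => ?_, ?_⟩
  · rw [hq, Gessel.even_val]
  · rintro m ⟨n, rfl⟩
    have := hq (2 * n + 1)
    rw [Gessel.odd_zero] at this
    exact_mod_cast this
end
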